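/- Let n ≥ 1 and let V : ℝⁿ → ℝ be smooth. Set S_h = {(q,p) ∈ ℝⁿ × ℝⁿ : V(q) + ‖p‖²/2 = h} for h ∈ ℝ. Assume S_h is nonempty, compact, and a regular level set (for every (q,p) ∈ S_h one has (∇V(q), p) ≠ (0,0)). Then there exist T > 0 and a nonconstant C² curve q : ℝ → ℝⁿ, periodic of period T, such that q''(t) = −∇V(q(t)) for all t ∈ ℝ and V(q(0)) + ‖q'(0)‖²/2 = h; that is, there exists a closed orbit of the Hamiltonian flow of H_V on S_h. -/

import Mathlib

open Set

/-!
By the Jacobi–Maupertuis principle, the closed orbits of energy `h` are, up to a change of time,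
the critical loops `q` of positive action of the product of the kinetic energy of `q` with the mean
depth of `q` below the level `h`. Two modifications make this functional accessible. Outside
`{V ≤ h}` a wall is added to `V - h`, giving a potential `w` on a bounded domain with a strong force
at the boundary; since `h` is a regular value, `⟪∇w, ∇V⟫ - w` stays bounded below by a positive
constant. And loops are replaced by `N`-gons, so that the functional lives in finite dimension.

Loops running back and forth along a segment in a fixed direction form a family parametrised by
`E × ℝ`. By Brouwer's theorem its image under any deformation fixing the loops of zero action
contains a small loop of prescribed energy around a given point of the well. Hence there are
critical `N`-gons with action bounded above and below uniformly in `N`. Testing criticality against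
`∇V` bounds their kinetic energies, so that as `N → ∞` they subconverge to a periodic solution of
`q'' = -k ∇w(q)` with energy zero. Along it `w ≤ 0`, so the orbit stays where `w = V - h`, and
rescaling time removes `k`.
-/

section Brouwer

open Filter Topology MeasureTheory
open scoped NNReal

lemma exists_polynomial_eval_eq_det_id_add_smul {F : Type*} [NormedAddCommGroup F]
    [NormedSpace ℝ F] [FiniteDimensional ℝ F] (A : F →L[ℝ] F) :
    ∃ P : Polynomial ℝ, P.natDegree ≤ Module.finrank ℝ F ∧
      ∀ t : ℝ, P.eval t = (ContinuousLinearMap.id ℝ F + t • A).det := by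
  let b := Module.finBasis ℝ F
  let M := LinearMap.toMatrix b b (A : F →ₗ[ℝ] F)
  refine ⟨((Polynomial.X : Polynomial ℝ) • M.map Polynomial.C
    + (1 : Matrix _ _ ℝ).map Polynomial.C).det, ?_, fun t ↦ ?_⟩
  · simpa using Polynomial.natDegree_det_X_add_C_le M 1
  · have det_eq : (ContinuousLinearMap.id ℝ F + t • A).det = (1 + t • M).det := by
      rw [ContinuousLinearMap.det, ← LinearMap.det_toMatrix b]
      congr 1
      simp [M]
    rw [det_eq, ← Polynomial.coe_evalRingHom, RingHom.map_det]
    congr 1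
    ext i j
    by_cases hij : i = j <;> simp [hij, add_comm] <;> ring

lemma exists_polynomial_eval_eq_integral {α : Type*} [MeasurableSpace α] {μ : Measure α}
    {d : ℕ} {P : α → Polynomial ℝ} (hdeg : ∀ x, (P x).natDegree ≤ d)
    (hint : ∀ t : ℝ, Integrable (fun x ↦ (P x).eval t) μ) :
    ∃ Q : Polynomial ℝ, ∀ t : ℝ, Q.eval t = ∫ x, (P x).eval t ∂μ := by
  let s := Finset.range (d + 1)
  have hinj : InjOn (Nat.cast : ℕ → ℝ) s := Nat.cast_injective.injOn
  have eval_eq (x : α) (t : ℝ) : (P x).eval t =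
      ∑ i ∈ s, (P x).eval (i : ℝ) * (Lagrange.basis s Nat.cast i).eval t := by
    have hlt : (P x).degree < s.card := by
      rw [Finset.card_range]
      exact Polynomial.degree_le_natDegree.trans_lt (by exact_mod_cast Nat.lt_succ_of_le (hdeg x))
    conv_lhs => rw [Lagrange.eq_interpolate hinj hlt]
    simp [Lagrange.interpolate_apply, Polynomial.eval_finsetSum]
  refine ⟨Lagrange.interpolate s Nat.cast fun i ↦ ∫ x, (P x).eval (i : ℝ) ∂μ, fun t ↦ ?_⟩
  simp only [eval_eq _ t]
  rw [integral_finsetSum s fun i _ ↦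
    (hint i).mul_const ((Lagrange.basis s Nat.cast i).eval t)]
  simp [Lagrange.interpolate_apply, Polynomial.eval_finsetSum, integral_mul_const]

lemma inter_frontier_nonempty_of_isPreconnected {X : Type*} [TopologicalSpace X] {s t : Set X}
    (ht : IsPreconnected t) (hts : (t ∩ s).Nonempty) (hts' : (t ∩ sᶜ).Nonempty) :
    (t ∩ frontier s).Nonempty := by
  by_contra! hempty
  have hcover : t ⊆ interior s ∪ (closure s)ᶜ := fun x hx ↦ by
    by_contra hx'
    rw [mem_union, not_or, notMem_compl_iff] at hx'
    exact (hempty ▸ ⟨hx, hx'.2, hx'.1⟩ : x ∈ (∅ : Set X))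
  obtain ⟨x, hxt, hxs⟩ := hts
  obtain ⟨y, hyt, hys⟩ := hts'
  have hx : x ∈ interior s :=
    (hcover hxt).resolve_right fun h ↦ h (subset_closure hxs)
  exact hys (interior_subset (ht.subset_left_of_subset_union isOpen_interior
    isClosed_closure.isOpen_compl
    (disjoint_compl_right.mono_left (interior_subset.trans subset_closure))
    hcover ⟨x, hxt, hx⟩ hyt))

lemma lipschitzWith_indicator_of_eqOn_frontier {E F : Type*} [NormedAddCommGroup E]
    [NormedSpace ℝ E] [NormedAddCommGroup F] {K : ℝ≥0} {f : E → F} {s : Set E}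
    (hf : LipschitzOnWith K f s) (hs : IsClosed s) (h0 : EqOn f 0 (frontier s)) :
    LipschitzWith K (s.indicator f) := by
  have cross {x y : E} (hx : x ∈ s) (hy : y ∉ s) : dist (f x) 0 ≤ K * dist x y := by
    obtain ⟨z, hz, hzs⟩ := inter_frontier_nonempty_of_isPreconnected
      (convex_segment x y).isPreconnected ⟨x, left_mem_segment ℝ x y, hx⟩
      ⟨y, right_mem_segment ℝ x y, hy⟩
    have hxz := hf.dist_le_mul x hx z (hs.frontier_subset hzs)
    rw [h0 hzs] at hxz
    have hxzy := dist_add_dist_of_mem_segment hz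
    exact hxz.trans (by gcongr; linarith [dist_nonneg (x := z) (y := y)])
  refine LipschitzWith.of_dist_le_mul fun x y ↦ ?_
  by_cases hx : x ∈ s <;> by_cases hy : y ∈ s <;> simp only [hx, hy, indicator_of_mem,
    indicator_of_notMem, not_false_eq_true]
  · exact hf.dist_le_mul x hx y hy
  · exact cross hx hy
  · rw [dist_comm, dist_comm x]
    exact cross hy hx
  · simpa using by positivity

lemma bijective_id_add_of_lipschitzWith {E : Type*} [NormedAddCommGroup E] [NormedSpace ℝ E]
    [CompleteSpace E] {K : ℝ≥0} {g : E → E} (hg : LipschitzWith K g) (hK : K < 1) :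
    Function.Bijective fun x ↦ x + g x := by
  have happ : ApproximatesLinearOn (fun x ↦ x + g x)
      (ContinuousLinearEquiv.refl ℝ E : E →L[ℝ] E) univ K := fun x _ y _ ↦ by
    simpa [add_sub_add_comm, dist_eq_norm] using hg.dist_le_mul x y
  have hN : Subsingleton E ∨
      K < ‖((ContinuousLinearEquiv.refl ℝ E).symm : E →L[ℝ] E)‖₊⁻¹ := by
    rcases subsingleton_or_nontrivial E with hE | hE
    · exact .inl hE
    · exact .inr (by simpa using hK)
  exact ⟨injOn_univ.1 (happ.injOn hN), happ.surjective hN⟩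

lemma eventually_det_id_add_smul_pos {E : Type*} [NormedAddCommGroup E]
    [NormedSpace ℝ E] {s : Set E} {A : E → E →L[ℝ] E} {C : ℝ}
    (hA : ∀ x ∈ s, ‖A x‖ ≤ C) :
    ∀ᶠ t : ℝ in 𝓝 0, ∀ x ∈ s, 0 < (ContinuousLinearMap.id ℝ E + t • A x).det := by
  have hpos : ∀ᶠ B in 𝓝 (0 : E →L[ℝ] E), 0 < (ContinuousLinearMap.id ℝ E + B).det := by
    refine ContinuousAt.eventually_lt continuousAt_const
      (ContinuousLinearMap.continuous_det.comp (continuous_const.add continuous_id)).continuousAt ?_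
    simp [ContinuousLinearMap.det]
  obtain ⟨ε, hε, hball⟩ := Metric.eventually_nhds_iff.1 hpos
  have hsmall : ∀ᶠ t : ℝ in 𝓝 0, |t| * C < ε :=
    ContinuousAt.eventually_lt (by fun_prop) continuousAt_const (by simpa using hε)
  filter_upwards [hsmall] with t ht x hx
  refine hball ?_
  rw [dist_zero_right, norm_smul, Real.norm_eq_abs]
  exact (mul_le_mul_of_nonneg_left (hA x hx) (abs_nonneg t)).trans_lt ht

section Volume

variable {E : Type*} [NormedAddCommGroup E] [NormedSpace ℝ E] [FiniteDimensional ℝ E]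
  [MeasurableSpace E] [BorelSpace E] (μ : Measure E) [μ.IsAddHaarMeasure]

lemma setIntegral_det_id_add_eq_measureReal {K : ℝ≥0} {s : Set E} {u : E → E}
    {u' : E → E →L[ℝ] E} (hs : IsClosed s) (hu : ∀ x ∈ s, HasFDerivWithinAt u (u' x) s x)
    (hLip : LipschitzOnWith K u s) (hK : K < 1) (h0 : EqOn u 0 (frontier s))
    (hdet : ∀ x ∈ s, 0 < (ContinuousLinearMap.id ℝ E + u' x).det) :
    ∫ x in s, (ContinuousLinearMap.id ℝ E + u' x).det ∂μ = μ.real s := by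
  have : CompleteSpace E := FiniteDimensional.complete ℝ E
  set g : E → E := fun x ↦ x + s.indicator u x
  obtain ⟨hinj, hsurj⟩ : Function.Bijective g := bijective_id_add_of_lipschitzWith
    (lipschitzWith_indicator_of_eqOn_frontier hLip hs h0) hK
  have hfix (x : E) (hx : x ∉ s) : g x = x := by simp [g, hx]
  have himage : g '' s = s := by
    rw [← compl_inj_iff, ← image_compl_eq ⟨hinj, hsurj⟩]
    exact (image_congr hfix).trans (image_id _)
  have hderiv (x : E) (hx : x ∈ s) :
      HasFDerivWithinAt g (ContinuousLinearMap.id ℝ E + u' x) s x :=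
    ((hasFDerivWithinAt_id x s).add (hu x hx)).congr (fun y hy ↦ by simp [g, hy]) (by simp [g, hx])
  have hchange := integral_image_eq_integral_abs_det_fderiv_smul μ
    hs.measurableSet hderiv hinj.injOn (fun _ ↦ (1 : ℝ))
  calc ∫ x in s, (ContinuousLinearMap.id ℝ E + u' x).det ∂μ
      = ∫ x in s, |(ContinuousLinearMap.id ℝ E + u' x).det| • (1 : ℝ) ∂μ :=
        setIntegral_congr_fun hs.measurableSet fun x hx ↦ by simp [abs_of_pos (hdet x hx)]
    _ = μ.real s := by rw [← hchange, himage]; simp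

lemma setIntegral_det_id_add_smul_fderiv_eq_measureReal {s : Set E} {u : E → E}
    (hs : IsCompact s) (hconv : Convex ℝ s) (hu : ContDiff ℝ 1 u) (h0 : EqOn u 0 (frontier s))
    (t : ℝ) :
    ∫ x in s, (ContinuousLinearMap.id ℝ E + t • fderiv ℝ u x).det ∂μ = μ.real s := by
  have hcont : Continuous (fderiv ℝ u) := hu.continuous_fderiv one_ne_zero
  choose P hdeg heval using fun x ↦ exists_polynomial_eval_eq_det_id_add_smul (fderiv ℝ u x)
  obtain ⟨Q, hQ⟩ := exists_polynomial_eval_eq_integral (μ := μ.restrict s) hdeg fun t ↦ by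
    simp only [heval]
    exact (ContinuousLinearMap.continuous_det.comp
      (continuous_const.add (hcont.const_smul t))).continuousOn.integrableOn_compact hs
  obtain ⟨C, hC⟩ := hs.exists_bound_of_continuousOn hcont.continuousOn
  have hLip : LipschitzOnWith C.toNNReal u s := hconv.lipschitzOnWith_of_nnnorm_fderiv_le
    (fun x _ ↦ hu.differentiable one_ne_zero x)
    (fun x hx ↦ by simpa [← NNReal.coe_le_coe] using .inl (hC x hx))
  have hsmall : ∀ᶠ t : ℝ in 𝓝 0, ‖t‖₊ * C.toNNReal < 1 :=
    ContinuousAt.eventually_lt (by fun_prop) continuousAt_const (by simp)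
  have hev : ∀ᶠ t : ℝ in 𝓝 0, Q.eval t = μ.real s := by
    filter_upwards [eventually_det_id_add_smul_pos hC, hsmall] with t hdet ht
    simp only [hQ, heval]
    refine setIntegral_det_id_add_eq_measureReal μ hs.isClosed (u := fun x ↦ t • u x)
      (fun x _ ↦ ((hu.differentiable one_ne_zero x).hasFDerivAt.const_smul t).hasFDerivWithinAt)
      (LipschitzOnWith.of_dist_le_mul fun x hx y hy ↦ ?_) ht
      (fun x hx ↦ by simp [h0 hx]) hdet
    rw [dist_smul₀, NNReal.coe_mul, mul_assoc, coe_nnnorm]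
    exact mul_le_mul_of_nonneg_left (hLip.dist_le_mul x hx y hy) (norm_nonneg t)
  have hconst : Q = Polynomial.C (μ.real s) :=
    Polynomial.eq_of_infinite_eval_eq _ _ ((infinite_of_mem_nhds 0 hev).mono fun t ht ↦ by
      simpa using ht)
  simpa [heval, hconst] using (hQ t).symm

end Volume

lemma det_fderiv_eq_zero_of_norm_eq_const {F : Type*} [NormedAddCommGroup F]
    [InnerProductSpace ℝ F] [FiniteDimensional ℝ F] {R : ℝ} (hR : R ≠ 0) {f : F → F}
    (hnorm : ∀ x, ‖f x‖ = R) {x : F} (hf : DifferentiableAt ℝ f x) :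
    (fderiv ℝ f x).det = 0 := by
  by_contra hdet
  have horth (v : F) : inner ℝ (f x) (fderiv ℝ f x v) = 0 := by
    have hconst : HasFDerivAt (fun y ↦ ‖f y‖ ^ 2) (0 : F →L[ℝ] ℝ) x := by
      simpa only [hnorm] using hasFDerivAt_const (R ^ 2) x
    simpa using DFunLike.congr_fun (hf.hasFDerivAt.norm_sq.unique hconst) v
  obtain ⟨v, hv⟩ : ∃ v, fderiv ℝ f x v = f x :=
    (LinearMap.equivOfDetNeZero (fderiv ℝ f x : F →ₗ[ℝ] F) hdet).surjective (f x)
  have hself := horth v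
  rw [hv, real_inner_self_eq_norm_sq, hnorm] at hself
  exact hR (pow_eq_zero_iff two_ne_zero |>.1 hself)

lemma exists_norm_eq_and_ne_of_norm_eq_const {F : Type*} [NormedAddCommGroup F]
    [InnerProductSpace ℝ F] [FiniteDimensional ℝ F] {R : ℝ} (hR : 0 < R) {f : F → F}
    (hf : ContDiff ℝ 1 f) (hnorm : ∀ x, ‖f x‖ = R) : ∃ x, ‖x‖ = R ∧ f x ≠ x := by
  by_contra! hfix
  let : MeasurableSpace F := borel F
  have : BorelSpace F := ⟨rfl⟩
  have hdiff := hf.differentiable one_ne_zero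
  have hvol := setIntegral_det_id_add_smul_fderiv_eq_measureReal volume
    (isCompact_closedBall (0 : F) R) (convex_closedBall 0 R) (u := f - id) (hf.sub contDiff_id)
    (fun x hx ↦ sub_eq_zero.2 (hfix x (by simpa [frontier_closedBall _ hR.ne'] using hx))) 1
  have hdet (x : F) : (ContinuousLinearMap.id ℝ F + (1 : ℝ) • fderiv ℝ (f - id) x).det = 0 := by
    rw [fderiv_sub (hdiff x) differentiableAt_id, fderiv_id, one_smul, add_sub_cancel]
    exact det_fderiv_eq_zero_of_norm_eq_const hR.ne' hnorm (hdiff x)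
  have hpos : 0 < volume.real (Metric.closedBall (0 : F) R) :=
    ENNReal.toReal_pos (Metric.measure_closedBall_pos volume 0 hR).ne'
      (isCompact_closedBall _ _).measure_ne_top
  rw [funext hdet, integral_zero] at hvol
  exact hpos.ne hvol

lemma zero_mem_range_of_eq_id_of_le_norm {F : Type*} [NormedAddCommGroup F]
    [InnerProductSpace ℝ F] [FiniteDimensional ℝ F] {r : ℝ} {ψ : F → F} (hψ : Continuous ψ)
    (hid : ∀ x, r ≤ ‖x‖ → ψ x = x) : 0 ∈ range ψ := by
  by_contra hne
  have hψ0 (x : F) : ψ x ≠ 0 := fun h ↦ hne ⟨x, h⟩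
  obtain ⟨g, hg, hgψ, hsupp⟩ := (hψ.sub continuous_id).exists_contDiff_approx 1
    (ε := fun x ↦ ‖ψ x‖) (by fun_prop) (fun x ↦ norm_pos_iff.2 (hψ0 x))
  have hg0 (x : F) (hx : r ≤ ‖x‖) : g x = 0 := by
    by_contra h
    simpa [hid x hx] using hsupp (Function.mem_support.2 h)
  have hne' (x : F) : x + g x ≠ 0 := fun h ↦ by
    have := hgψ x
    rw [dist_eq_norm, Pi.sub_apply, id, sub_sub_eq_add_sub, add_comm (g x), h, zero_sub,
      norm_neg] at this
    exact this.false
  have hG : ContDiff ℝ 1 fun x ↦ x + g x := contDiff_id.add (by exact_mod_cast hg)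
  have hR : 0 < max r 1 := one_pos.trans_le (le_max_right _ _)
  obtain ⟨x, hx, hxne⟩ := exists_norm_eq_and_ne_of_norm_eq_const hR
    (f := fun x ↦ (max r 1 / ‖x + g x‖) • (x + g x))
    ((contDiff_const.div (hG.norm ℝ hne') fun x ↦ norm_ne_zero_iff.2 (hne' x)).smul hG)
    (fun x ↦ by
      rw [norm_smul, norm_div, norm_norm, Real.norm_of_nonneg hR.le,
        div_mul_cancel₀ _ (norm_ne_zero_iff.2 (hne' x))])
  exact hxne (by simp [hg0 x (hx ▸ le_max_left _ _), hx, hR.ne'])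

theorem surjective_of_eq_id_outside_isBounded {F : Type*} [NormedAddCommGroup F]
    [NormedSpace ℝ F] [FiniteDimensional ℝ F] {s : Set F} (hs : Bornology.IsBounded s)
    {ψ : F → F} (hψ : Continuous ψ) (hid : ∀ x ∉ s, ψ x = x) : Function.Surjective ψ := by
  intro y
  let e := toEuclidean (E := F)
  let L : F →L[ℝ] EuclideanSpace ℝ (Fin (Module.finrank ℝ F)) := e
  obtain ⟨r, hr⟩ := hs.subset_ball y
  have hnorm (z : EuclideanSpace ℝ (Fin (Module.finrank ℝ F))) :
      ‖z‖ ≤ ‖L‖ * ‖e.symm z‖ := by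
    simpa [L] using L.le_opNorm (e.symm z)
  obtain ⟨z, hz⟩ := zero_mem_range_of_eq_id_of_le_norm (r := ‖L‖ * r + 1)
    (ψ := fun z ↦ e (ψ (e.symm z + y) - y)) (by fun_prop) fun z hz ↦ by
      have hmem : e.symm z + y ∉ s := fun hmem ↦ by
        have hlt : ‖e.symm z‖ < r := by simpa using hr hmem
        have := mul_le_mul_of_nonneg_left hlt.le (norm_nonneg L)
        linarith [hnorm z]
      simp [hid _ hmem]
  exact ⟨e.symm z + y, sub_eq_zero.1 (e.map_eq_zero_iff.1 hz)⟩

lemma exists_apply_eq_of_eq_id_on_halfSpace {F : Type*} [NormedAddCommGroup F] [NormedSpace ℝ F]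
    [FiniteDimensional ℝ F] {s : Set (F × ℝ)} (hs : Bornology.IsBounded s)
    {ψ : F × ℝ → F × ℝ} (hψ : Continuous ψ)
    (hid : ∀ x, 0 ≤ x.2 → x ∉ s ∨ x.2 = 0 → ψ x = x) {y : F × ℝ} (hy : 0 ≤ y.2) :
    ∃ x, ψ x = y := by
  let φ (x : F × ℝ) : F × ℝ := if 0 ≤ x.2 then ψ x else x
  have hφ : Continuous φ := hψ.if_le continuous_id continuous_const continuous_snd
    fun x hx ↦ hid x hx.le (.inr hx.symm)
  obtain ⟨x, hx⟩ := surjective_of_eq_id_outside_isBounded hs hφ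
    (fun x hx ↦ ite_eq_right_iff.2 fun hx₂ ↦ hid x hx₂ (.inl hx)) y
  by_cases hx₂ : 0 ≤ x.2
  · exact ⟨x, (if_pos hx₂).symm.trans hx⟩
  · rw [show φ x = x from if_neg hx₂] at hx
    exact absurd (hx ▸ hy) hx₂

end Brouwer

section Deformation

open Filter Topology

variable {F : Type*} [NormedAddCommGroup F] [NormedSpace ℝ F] {f : F → ℝ} {G : F → F}

lemma eventually_sub_smul_le_sub_mul {m : ℝ} {x : F} (hf : ContDiffAt ℝ 1 f x)
    (hG : ContinuousAt G x) (hm : m < fderiv ℝ f x (G x)) :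
    ∀ᶠ z : ℝ × F in 𝓝 (0, x), 0 ≤ z.1 → f (z.2 - z.1 • G z.2) ≤ f z.2 - z.1 * m := by
  obtain ⟨ε, hε, hεm⟩ : ∃ ε > 0, ε * ‖G x‖ < fderiv ℝ f x (G x) - m := by
    refine ⟨(fderiv ℝ f x (G x) - m) / (‖G x‖ + 1), by have := sub_pos.2 hm; positivity, ?_⟩
    rw [div_mul_eq_mul_div, div_lt_iff₀ (by positivity)]
    linarith
  have : ContinuousAt (fun z : ℝ × F ↦ G z.2) (0, x) := hG.comp_of_eq continuousAt_snd rfl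
  have hstep : Tendsto (fun z : ℝ × F ↦ (z.2 - z.1 • G z.2, z.2)) (𝓝 (0, x)) (𝓝 (x, x)) := by
    have hcont : ContinuousAt (fun z : ℝ × F ↦ (z.2 - z.1 • G z.2, z.2)) (0, x) := by fun_prop
    simpa [ContinuousAt] using hcont
  have hlin : ∀ᶠ z : ℝ × F in 𝓝 (0, x), ε * ‖G z.2‖ < fderiv ℝ f x (G z.2) - m :=
    ContinuousAt.eventually_lt (by fun_prop) (by fun_prop) hεm
  have hstrict := (hf.hasStrictFDerivAt one_ne_zero).isLittleO.def hε
  filter_upwards [hstep.eventually hstrict, hlin] with ⟨t, y⟩ herr hlt ht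
  simp only [sub_sub_cancel_left, map_neg, map_smul, smul_eq_mul, norm_neg, norm_smul,
    Real.norm_of_nonneg ht, Real.norm_eq_abs] at herr hlt
  linarith [(abs_le.1 herr).2, mul_le_mul_of_nonneg_left hlt.le ht]

lemma exists_forall_sub_smul_le_sub_mul {K : Set F} (hK : IsCompact K)
    (hf : ∀ x ∈ K, ContDiffAt ℝ 1 f x) (hG : ∀ x ∈ K, ContinuousAt G x)
    (hpos : ∀ x ∈ K, 0 < fderiv ℝ f x (G x)) :
    ∃ τ > 0, ∃ m > 0, ∀ x ∈ K, ∀ t ∈ Icc 0 τ, f (x - t • G x) ≤ f x - t * m := by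
  have hcont : ContinuousOn (fun x ↦ fderiv ℝ f x (G x)) K := fun x hx ↦
    (((hf x hx).fderiv_right (m := 0) le_rfl).continuousAt.clm_apply
      (hG x hx)).continuousWithinAt
  obtain ⟨m, hm, hmK⟩ := hK.exists_forall_le' hcont hpos
  have hev := hK.eventually_forall_of_forall_eventually (x₀ := (0 : ℝ)) (P := fun t x ↦
      0 ≤ t → f (x - t • G x) ≤ f x - t * (m / 2)) fun x hx ↦
    eventually_sub_smul_le_sub_mul (hf x hx) (hG x hx) ((half_lt_self hm).trans_le (hmK x hx))
  obtain ⟨τ, hτ, hball⟩ := Metric.eventually_nhds_iff.1 hev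
  refine ⟨τ / 2, half_pos hτ, m / 2, half_pos hm, fun x hx t ht ↦ hball ?_ x hx ht.1⟩
  rw [Real.dist_0_eq_abs, abs_of_nonneg ht.1]
  exact ht.2.trans_lt (half_lt_self hτ)

lemma exists_continuous_step_decreasing {a b c : ℝ} (hac : a < c) (hf : Continuous f)
    (hf' : ∀ x, a ≤ f x → ContDiffAt ℝ 1 f x) (hG : ∀ x, a ≤ f x → ContinuousAt G x)
    (hK : IsCompact (f ⁻¹' Icc a b)) (hpos : ∀ x ∈ f ⁻¹' Icc a b, 0 < fderiv ℝ f x (G x)) :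
    ∃ S : F → F, Continuous S ∧ (∀ x, f x ≤ a → S x = x) ∧ ∃ δ > 0, ∀ x, f x ≤ b →
      f (S x) ≤ f x ∧ (c ≤ f x → f (S x) ≤ f x - δ) := by
  obtain ⟨τ, hτ, m, hm, hdecr⟩ := exists_forall_sub_smul_le_sub_mul hK
    (fun x hx ↦ hf' x hx.1) (fun x hx ↦ hG x hx.1) hpos
  let χ : ℝ → ℝ := fun s ↦ Real.smoothTransition ((s - a) / (c - a))
  have : Continuous χ := Real.smoothTransition.continuous.comp (by fun_prop)
  have hχa (s : ℝ) (hs : s ≤ a) : χ s = 0 := Real.smoothTransition.zero_of_nonpos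
    (div_nonpos_of_nonpos_of_nonneg (sub_nonpos.2 hs) (sub_pos.2 hac).le)
  have hχc (s : ℝ) (hs : c ≤ s) : χ s = 1 := Real.smoothTransition.one_of_one_le
    ((one_le_div (sub_pos.2 hac)).2 (sub_le_sub_right hs a))
  have hS (x : F) (hx : f x ≤ a) : x - (τ * χ (f x)) • G x = x := by simp [hχa _ hx]
  have hdecr' (x : F) (hxa : a ≤ f x) (hxb : f x ≤ b) :
      f (x - (τ * χ (f x)) • G x) ≤ f x - τ * χ (f x) * m :=
    hdecr x ⟨hxa, hxb⟩ _ ⟨mul_nonneg hτ.le (Real.smoothTransition.nonneg _),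
      mul_le_of_le_one_right hτ.le (Real.smoothTransition.le_one _)⟩
  refine ⟨fun x ↦ x - (τ * χ (f x)) • G x, ?_, hS, τ * m, mul_pos hτ hm,
    fun x hxb ↦ ⟨?_, fun hxc ↦ ?_⟩⟩
  · refine continuous_iff_continuousAt.2 fun x ↦ ?_
    rcases le_or_gt a (f x) with hxa | hxa
    · have := hG x hxa
      fun_prop
    · exact continuousAt_id.congr ((hf.continuousAt.eventually_lt continuousAt_const hxa).mono
        fun y hy ↦ (hS y hy.le).symm)
  · rcases le_total (f x) a with hxa | hxa
    · exact (congrArg f (hS x hxa)).le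
    · exact (hdecr' x hxa hxb).trans (sub_le_self _
        (mul_nonneg (mul_nonneg hτ.le (Real.smoothTransition.nonneg _)) hm.le))
  · simpa [hχc _ hxc] using hdecr' x (hac.le.trans hxc) hxb

lemma exists_continuous_deformation_lt {a b c : ℝ} (hac : a < c) (hf : Continuous f)
    (hf' : ∀ x, a < f x → ContDiffAt ℝ 1 f x) (hG : ∀ x, a < f x → ContinuousAt G x)
    (hK : IsCompact (f ⁻¹' Icc a b))
    (hpos : ∀ x, a < f x → f x ≤ b → 0 < fderiv ℝ f x (G x)) :
    ∃ H : F → F, Continuous H ∧ (∀ x, f x ≤ a → H x = x) ∧ ∀ x, f x ≤ b → f (H x) < c := by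
  obtain ⟨a', haa', ha'c⟩ := exists_between hac
  obtain ⟨S, hS, hSid, δ, hδ, hSdecr⟩ := exists_continuous_step_decreasing (b := b) ha'c hf
    (fun x hx ↦ hf' x (haa'.trans_le hx)) (fun x hx ↦ hG x (haa'.trans_le hx))
    (hK.of_isClosed_subset (isClosed_Icc.preimage hf) (preimage_mono (Icc_subset_Icc_left haa'.le)))
    (fun x hx ↦ hpos x (haa'.trans_le hx.1) hx.2)
  have hiter (x : F) (hx : f x ≤ b) (k : ℕ) :
      f (S^[k] x) ≤ b ∧ (f (S^[k] x) < c ∨ f (S^[k] x) ≤ b - k * δ) := by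
    induction k with
    | zero => simp [hx]
    | succ k ih =>
      rw [Function.iterate_succ_apply']
      obtain ⟨hle, hstep⟩ := hSdecr _ ih.1
      refine ⟨hle.trans ih.1, (lt_or_ge (f (S^[k] x)) c).imp hle.trans_lt fun hc ↦ ?_⟩
      push_cast
      linarith [hstep hc, ih.2.resolve_left hc.not_gt]
  obtain ⟨k, hk⟩ := exists_nat_gt ((b - c) / δ)
  rw [div_lt_iff₀ hδ] at hk
  exact ⟨S^[k], hS.iterate k, fun x hx ↦ Function.iterate_fixed (hSid x (hx.trans haa'.le)) k,
    fun x hx ↦ (hiter x hx k).2.elim id fun h ↦ by linarith⟩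

end Deformation

section Polygons

variable {N : ℕ} [NeZero N]

/-- The mean of `-w` over the vertices of a closed polygon, the discrete counterpart of the mean
of `-w` along a loop. -/
noncomputable def meanDepth {α : Type*} (w : α → ℝ) (q : ZMod N → α) : ℝ :=
  -((N : ℝ)⁻¹ * ∑ i, w (q i))

section MeanDepth

variable {α : Type*} {w : α → ℝ} {q : ZMod N → α} {a : ℝ}

lemma sum_eq_neg_mul_meanDepth (w : α → ℝ) (q : ZMod N → α) :
    ∑ i, w (q i) = -(N * meanDepth w q) := by
  have hN : (N : ℝ) ≠ 0 := mod_cast NeZero.ne N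
  rw [meanDepth]; field_simp

lemma le_meanDepth (h : ∀ i, w (q i) ≤ -a) : a ≤ meanDepth w q := by
  have hN : (0 : ℝ) < N := mod_cast NeZero.pos N
  have hsum := Finset.sum_le_card_nsmul Finset.univ _ _ fun i _ ↦ h i
  rw [sum_eq_neg_mul_meanDepth, Finset.card_univ, ZMod.card, nsmul_eq_mul] at hsum
  nlinarith

lemma meanDepth_le (h : ∀ i, -a ≤ w (q i)) : meanDepth w q ≤ a := by
  have hN : (0 : ℝ) < N := mod_cast NeZero.pos N
  have hsum := Finset.card_nsmul_le_sum Finset.univ _ _ fun i _ ↦ h i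
  rw [sum_eq_neg_mul_meanDepth, Finset.card_univ, ZMod.card, nsmul_eq_mul] at hsum
  nlinarith

lemma sum_add_le_mul_of_meanDepth_nonneg (h : 0 ≤ meanDepth w q) (a : ℝ) :
    ∑ i, (w (q i) + a) ≤ N * a := by
  have : 0 ≤ N * meanDepth w q := by positivity
  rw [Finset.sum_add_distrib, sum_eq_neg_mul_meanDepth, Finset.sum_const, Finset.card_univ,
    ZMod.card, nsmul_eq_mul]
  linarith

end MeanDepth

lemma sum_range_natCast_add_le_sum {f : ZMod N → ℝ} (hf : ∀ i, 0 ≤ f i) (j : ZMod N) {k : ℕ}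
    (hk : k ≤ N) : ∑ l ∈ Finset.range k, f (j + l) ≤ ∑ i, f i := by
  have hinj : InjOn (fun l : ℕ ↦ j + (l : ZMod N)) (Finset.range k) := by
    intro a ha b hb hab
    simp only [Finset.coe_range, mem_Iio] at ha hb
    have hval := congrArg ZMod.val (add_left_cancel hab)
    rwa [ZMod.val_natCast_of_lt (ha.trans_le hk), ZMod.val_natCast_of_lt (hb.trans_le hk)] at hval
  rw [← Finset.sum_image hinj]
  exact Finset.sum_le_univ_sum_of_nonneg hf

section Normed

variable {E : Type*} [NormedAddCommGroup E]

/-- The kinetic energy of a closed polygon with `N` vertices, regarded as a piecewise linear loop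
parametrized by `[0, 1]`. -/
noncomputable def kineticEnergy (q : ZMod N → E) : ℝ :=
  (N : ℝ) / 2 * ∑ i, ‖q (i + 1) - q i‖ ^ 2

lemma kineticEnergy_nonneg (q : ZMod N → E) : 0 ≤ kineticEnergy q := by
  unfold kineticEnergy; positivity

lemma continuous_kineticEnergy : Continuous (kineticEnergy : (ZMod N → E) → ℝ) := by
  unfold kineticEnergy; fun_prop

lemma kineticEnergy_le_half {q : ZMod N → E} (hq : ∀ i, ‖q (i + 1) - q i‖ ≤ 1 / N) :
    kineticEnergy q ≤ 1 / 2 := by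
  have hN : (0 : ℝ) < N := mod_cast NeZero.pos N
  calc kineticEnergy q ≤ N / 2 * ∑ _i : ZMod N, (1 / (N : ℝ)) ^ 2 := by
        unfold kineticEnergy; gcongr with i; exact hq i
    _ = 1 / 2 := by simp; field_simp

lemma sq_norm_sub_le_mul_kineticEnergy (q : ZMod N → E) (j : ZMod N) {k : ℕ} (hk : k ≤ N) :
    ‖q (j + k) - q j‖ ^ 2 ≤ k / N * (2 * kineticEnergy q) := by
  have hN : (0 : ℝ) < N := mod_cast NeZero.pos N
  have htelescope : ∑ l ∈ Finset.range k, (q (j + l + 1) - q (j + l)) = q (j + k) - q j := by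
    simpa [add_assoc] using Finset.sum_range_sub (fun l : ℕ ↦ q (j + l)) k
  calc ‖q (j + k) - q j‖ ^ 2
      ≤ (∑ l ∈ Finset.range k, ‖q (j + l + 1) - q (j + l)‖) ^ 2 := by
        rw [← htelescope]; gcongr; exact norm_sum_le _ _
    _ ≤ k * ∑ l ∈ Finset.range k, ‖q (j + l + 1) - q (j + l)‖ ^ 2 := by
        simpa using sq_sum_le_card_mul_sum_sq (s := Finset.range k)
          (f := fun l : ℕ ↦ ‖q (j + l + 1) - q (j + l)‖)
    _ ≤ k * ∑ i, ‖q (i + 1) - q i‖ ^ 2 := by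
        gcongr
        exact sum_range_natCast_add_le_sum (fun i ↦ sq_nonneg ‖q (i + 1) - q i‖) j hk
    _ = k / N * (2 * kineticEnergy q) := by unfold kineticEnergy; field_simp

lemma sq_norm_sub_le_two_mul_kineticEnergy (q : ZMod N → E) (i j : ZMod N) :
    ‖q i - q j‖ ^ 2 ≤ 2 * kineticEnergy q := by
  have h := sq_norm_sub_le_mul_kineticEnergy q j (ZMod.val_lt (i - j)).le
  rw [ZMod.natCast_zmod_val, add_sub_cancel] at h
  refine h.trans (mul_le_of_le_one_left (by linarith [kineticEnergy_nonneg q]) ?_)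
  exact div_le_one_of_le₀ (mod_cast (ZMod.val_lt _).le) N.cast_nonneg

lemma infDist_add_natCast_le (s : Set E) (q : ZMod N → E) {i : ZMod N} {l : ℕ} (hl : l ≤ N)
    (hl' : l ≤ Metric.infDist (q i) s ^ 2 * N) :
    Metric.infDist (q (i + l)) s ≤ Metric.infDist (q i) s * (1 + √(2 * kineticEnergy q)) := by
  have hN : (0 : ℝ) < N := mod_cast NeZero.pos N
  have hkinetic := kineticEnergy_nonneg q
  have hdist : ‖q (i + l) - q i‖ ≤ Metric.infDist (q i) s * √(2 * kineticEnergy q) := by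
    refine (abs_le_of_sq_le_sq' ?_ (mul_nonneg Metric.infDist_nonneg (Real.sqrt_nonneg _))).2
    rw [mul_pow, Real.sq_sqrt (by positivity)]
    refine (sq_norm_sub_le_mul_kineticEnergy q i hl).trans ?_
    gcongr
    exact (div_le_iff₀ hN).2 hl'
  rw [← dist_eq_norm] at hdist
  linarith [Metric.infDist_le_infDist_add_dist (s := s) (x := q (i + l)) (y := q i)]

end Normed

variable {E : Type*} [NormedAddCommGroup E] [InnerProductSpace ℝ E]

lemma sum_inner_second_difference (q φ : ZMod N → E) :
    ∑ i, inner ℝ ((2 : ℝ) • q i - q (i + 1) - q (i - 1)) (φ i) =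
      ∑ i, inner ℝ (q (i + 1) - q i) (φ (i + 1) - φ i) := by
  have hshift : ∑ i, inner ℝ (q (i + 1) - q i) (φ (i + 1)) =
      ∑ i, inner ℝ (q i - q (i - 1)) (φ i) := by
    rw [← Equiv.sum_comp (Equiv.addRight (1 : ZMod N)) fun i ↦ inner ℝ (q i - q (i - 1)) (φ i)]
    simp
  simp only [inner_sub_right, Finset.sum_sub_distrib, hshift]
  rw [← Finset.sum_sub_distrib]
  congr! 1 with i
  rw [← inner_sub_left]
  congr 1
  module

lemma contDiffAt_kineticEnergy_mul_meanDepth {w : E → ℝ} {q : ZMod N → E} {n : WithTop ℕ∞}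
    (hw : ∀ i, ContDiffAt ℝ n w (q i)) :
    ContDiffAt ℝ n (fun q : ZMod N → E ↦ kineticEnergy q * meanDepth w q) q := by
  have hvertex (i : ZMod N) : ContDiffAt ℝ n (fun q : ZMod N → E ↦ q i) q :=
    (contDiff_apply ℝ E i).contDiffAt
  refine .mul (contDiffAt_const.mul (.sum fun i _ ↦ ?_))
    (contDiffAt_const.mul (.sum fun i _ ↦ ?_)).neg
  · exact ((hvertex (i + 1)).sub (hvertex i)).norm_sq ℝ
  · exact (hw i).comp q (hvertex i)

variable [CompleteSpace E]

/-- The gradient of the discrete Maupertuis functional `kineticEnergy q * meanDepth w q` with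
respect to the inner product `∑ i, ⟪q i, q' i⟫` on polygons. -/
noncomputable def maupertuisGradient (w : E → ℝ) (q : ZMod N → E) (i : ZMod N) : E :=
  (meanDepth w q * N) • ((2 : ℝ) • q i - q (i + 1) - q (i - 1)) -
    (kineticEnergy q / N) • gradient w (q i)

lemma sum_inner_maupertuisGradient (w : E → ℝ) (q φ : ZMod N → E) :
    ∑ i, inner ℝ (maupertuisGradient w q i) (φ i) =
      meanDepth w q * N * ∑ i, inner ℝ (q (i + 1) - q i) (φ (i + 1) - φ i) -
        kineticEnergy q / N * ∑ i, inner ℝ (gradient w (q i)) (φ i) := by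
  rw [← sum_inner_second_difference, Finset.mul_sum, Finset.mul_sum, ← Finset.sum_sub_distrib]
  simp only [maupertuisGradient, inner_sub_left, real_inner_smul_left]

lemma discrete_newton_of_maupertuisGradient_eq_zero {w : E → ℝ} {q : ZMod N → E}
    (hdepth : meanDepth w q ≠ 0) (hcrit : maupertuisGradient w q = 0) (i : ZMod N) :
    (N : ℝ) • (q (i + 1) - q i) - (N : ℝ) • (q i - q (i - 1)) =
      -((kineticEnergy q / meanDepth w q / N) • gradient w (q i)) := by
  have hi := sub_eq_zero.1 (congrFun hcrit i)
  calc _ = -((meanDepth w q)⁻¹ • (meanDepth w q * N) •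
        ((2 : ℝ) • q i - q (i + 1) - q (i - 1))) := by
        rw [smul_smul, inv_mul_cancel_left₀ hdepth]; module
    _ = _ := by rw [hi, smul_smul]; congr 2; field_simp

lemma fderiv_kineticEnergy_mul_meanDepth_apply {w : E → ℝ} {q : ZMod N → E}
    (hw : ∀ i, DifferentiableAt ℝ w (q i)) (φ : ZMod N → E) :
    fderiv ℝ (fun q : ZMod N → E ↦ kineticEnergy q * meanDepth w q) q φ =
      ∑ i, inner ℝ (maupertuisGradient w q i) (φ i) := by
  have hN : (0 : ℝ) < N := mod_cast NeZero.pos N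
  let vertex (i : ZMod N) := ContinuousLinearMap.proj (R := ℝ) (φ := fun _ : ZMod N ↦ E) i
  have hkinetic := (HasFDerivAt.fun_sum (u := Finset.univ) fun i _ ↦
    ((vertex (i + 1)).hasFDerivAt.sub (vertex i).hasFDerivAt).norm_sq (x := q)).const_mul
      ((N : ℝ) / 2)
  have hdepth := ((HasFDerivAt.fun_sum (u := Finset.univ) fun i _ ↦
    (hw i).hasGradientAt.hasFDerivAt.comp q (vertex i).hasFDerivAt).const_mul (N : ℝ)⁻¹).neg
  have hprod := congrArg (· φ) (hkinetic.mul hdepth).fderiv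
  rw [sum_inner_maupertuisGradient, kineticEnergy, meanDepth]
  refine hprod.trans ?_
  simp only [add_apply, smul_apply, neg_apply, sum_apply, sub_apply, vertex, Pi.sub_apply,
    Pi.neg_apply, ContinuousLinearMap.comp_apply, ContinuousLinearMap.proj_apply,
    InnerProductSpace.toDual_apply_apply, innerSL_apply_apply, Function.comp_apply,
    smul_eq_mul, nsmul_eq_mul, ← Finset.mul_sum]
  push_cast
  field_simp
  ring

end Polygons

section Linking

variable {N : ℕ}

/-- The distance to `0` in the cyclic group `ZMod N`, as a fraction of the length of the cycle. -/
noncomputable def tent (i : ZMod N) : ℝ := i.valMinAbs.natAbs / N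

lemma tent_zero : tent (0 : ZMod N) = 0 := by simp [tent]

lemma tent_nonneg (i : ZMod N) : 0 ≤ tent i := by unfold tent; positivity

lemma abs_tent_add_one_sub_le [NeZero N] (i : ZMod N) : |tent (i + 1) - tent i| ≤ 1 / N := by
  have hone : (1 : ZMod N).valMinAbs.natAbs ≤ 1 := by
    have hval : (1 : ZMod N).val ≤ 1 := by
      simpa [ZMod.val_one_eq_one_mod] using Nat.mod_le 1 N
    exact (ZMod.valMinAbs_natAbs_eq_min 1).trans_le ((min_le_left _ _).trans hval)
  have hup := (ZMod.natAbs_valMinAbs_add_le i 1).trans (Int.natAbs_add_le _ _)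
  have hdown := (ZMod.natAbs_valMinAbs_add_le (i + 1) (-1)).trans (Int.natAbs_add_le _ _)
  rw [add_neg_cancel_right, ZMod.natAbs_valMinAbs_neg] at hdown
  have hdist : |((i + 1).valMinAbs.natAbs : ℤ) - i.valMinAbs.natAbs| ≤ 1 := by
    rw [abs_le]; omega
  rw [tent, tent, ← sub_div, abs_div, Nat.abs_cast]
  gcongr
  exact_mod_cast hdist

lemma exists_quarter_le_tent (hN : 2 ≤ N) : ∃ i : ZMod N, 1 / 4 ≤ tent i := by
  have : NeZero N := ⟨by omega⟩
  refine ⟨(N / 2 : ℕ), ?_⟩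
  rw [tent, ZMod.valMinAbs_natCast_of_le_half le_rfl, Int.natAbs_natCast,
    le_div_iff₀ (mod_cast NeZero.pos N)]
  have hquarter : N ≤ 4 * (N / 2) := by omega
  have : (N : ℝ) ≤ 4 * (N / 2 : ℕ) := mod_cast hquarter
  linarith

variable {E : Type*} [NormedAddCommGroup E] [InnerProductSpace ℝ E] {v : E}

/-- The polygon which starts at `x.1`, runs along a straight segment in the direction `v` with
speed proportional to `x.2`, and comes back the same way. -/
noncomputable def segmentLoop (v : E) (x : E × ℝ) (i : ZMod N) : E := x.1 + (x.2 * tent i) • v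

lemma continuous_segmentLoop (v : E) :
    Continuous (segmentLoop v : E × ℝ → ZMod N → E) := by
  unfold segmentLoop; fun_prop

lemma segmentLoop_zero (v : E) (x : E × ℝ) : segmentLoop v x (0 : ZMod N) = x.1 := by
  simp [segmentLoop, tent_zero]

variable [NeZero N]

lemma kineticEnergy_segmentLoop (v : E) (x : E × ℝ) :
    kineticEnergy (segmentLoop v x : ZMod N → E) =
      x.2 ^ 2 * kineticEnergy (segmentLoop v (0, 1) : ZMod N → E) := by
  have hscale (i : ZMod N) : segmentLoop v x (i + 1) - segmentLoop v x i =
      x.2 • (segmentLoop v (0, 1) (i + 1) - segmentLoop v (0, 1) i) := by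
    unfold segmentLoop; module
  simp only [kineticEnergy, hscale, norm_smul, mul_pow, Real.norm_eq_abs, sq_abs,
    ← Finset.mul_sum]
  ring

lemma kineticEnergy_segmentLoop_le (hv : ‖v‖ = 1) (x : E × ℝ) :
    kineticEnergy (segmentLoop v x : ZMod N → E) ≤ x.2 ^ 2 / 2 := by
  have hunit : kineticEnergy (segmentLoop v (0, 1) : ZMod N → E) ≤ 1 / 2 := by
    refine kineticEnergy_le_half fun i ↦ ?_
    simpa [segmentLoop, ← sub_smul, norm_smul, hv] using abs_tent_add_one_sub_le i
  rw [kineticEnergy_segmentLoop, div_eq_mul_one_div]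
  gcongr

lemma kineticEnergy_segmentLoop_pos (hv : v ≠ 0) (hN : 2 ≤ N) :
    0 < kineticEnergy (segmentLoop v (0, 1) : ZMod N → E) := by
  obtain ⟨i, hi⟩ := exists_quarter_le_tent hN
  have hvertex := sq_norm_sub_le_two_mul_kineticEnergy (segmentLoop v (0, 1)) i 0
  have : 0 < ‖segmentLoop v (0, 1) i - segmentLoop v (0, 1) (0 : ZMod N)‖ := by
    rw [segmentLoop_zero, norm_pos_iff]
    simpa [segmentLoop] using ⟨by linarith, hv⟩
  nlinarith

lemma exists_apply_segmentLoop_eq [FiniteDimensional ℝ E] (hv : v ≠ 0) (hN : 2 ≤ N)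
    {H : (ZMod N → E) → ZMod N → E} (hH : Continuous H) {s : Set (E × ℝ)}
    (hs : Bornology.IsBounded s)
    (hid : ∀ x, x ∉ s ∨ x.2 = 0 → H (segmentLoop v x) = segmentLoop v x)
    (p : E) {k : ℝ} (hk : 0 ≤ k) :
    ∃ x, H (segmentLoop v x) 0 = p ∧ kineticEnergy (H (segmentLoop v x)) = k := by
  set κ := kineticEnergy (segmentLoop v (0, 1) : ZMod N → E)
  have hκ : 0 < κ := kineticEnergy_segmentLoop_pos hv hN
  let Q (x : E × ℝ) : E × ℝ :=
    (H (segmentLoop v x) 0, √(kineticEnergy (H (segmentLoop v x)) / κ))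
  have hQ : Continuous Q := by
    have hloop : Continuous fun x : E × ℝ ↦ H (segmentLoop v x) :=
      hH.comp (continuous_segmentLoop v)
    exact ((continuous_apply 0).comp hloop).prodMk
      ((continuous_kineticEnergy.comp hloop).div_const κ).sqrt
  have hQid (x : E × ℝ) (hx : 0 ≤ x.2) (h : x ∉ s ∨ x.2 = 0) : Q x = x := by
    simp only [Q, hid x h, segmentLoop_zero, kineticEnergy_segmentLoop v x]
    rw [mul_div_assoc, div_self hκ.ne', mul_one, Real.sqrt_sq hx]
  obtain ⟨x, hx⟩ := exists_apply_eq_of_eq_id_on_halfSpace hs hQ hQid (y := (p, √(k / κ)))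
    (Real.sqrt_nonneg _)
  obtain ⟨hstart, henergy⟩ := Prod.mk.inj hx
  refine ⟨x, hstart, ?_⟩
  rwa [Real.sqrt_inj (div_nonneg (kineticEnergy_nonneg _) hκ.le) (div_nonneg hk hκ.le),
    div_left_inj' hκ.ne'] at henergy

end Linking

section Wells

open Filter Metric Topology
open scoped NNReal

/-- A potential on a bounded domain which tends to `+∞` at the boundary like a strong force, takes
negative values, and admits a Lipschitz vector field `field` satisfying the contact type inequality
`contact`. The closed orbits of energy `0` of `potential` are the closed orbits to be found. -/
structure PotentialWell (E : Type*) [NormedAddCommGroup E] [InnerProductSpace ℝ E]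
    [CompleteSpace E] where
  domain : Set E
  potential : E → ℝ
  field : E → E
  c : ℝ
  M : ℝ
  δ : ℝ
  L : ℝ≥0
  isOpen_domain : IsOpen domain
  isBounded_domain : Bornology.IsBounded domain
  contDiffOn_potential : ContDiffOn ℝ 1 potential domain
  exists_potential_neg : ∃ x ∈ domain, potential x < 0
  c_pos : 0 < c
  strong_force : ∀ x ∈ domain, c / infDist x domainᶜ ^ 4 - M ≤ potential x
  lipschitzOnWith_field : LipschitzOnWith L field domain
  δ_pos : 0 < δ
  contact : ∀ x ∈ domain, δ + potential x ≤ inner ℝ (gradient potential x) (field x)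

namespace PotentialWell

variable {E : Type*} [NormedAddCommGroup E] [InnerProductSpace ℝ E] [CompleteSpace E]
  (W : PotentialWell E) {N : ℕ}

lemma neg_M_le {x : E} (hx : x ∈ W.domain) : -W.M ≤ W.potential x := by
  have := W.strong_force x hx
  have : 0 ≤ W.c / infDist x W.domainᶜ ^ 4 := by have := W.c_pos; positivity
  linarith

lemma M_pos : 0 < W.M := by
  obtain ⟨x, hx, hneg⟩ := W.exists_potential_neg
  linarith [W.neg_M_le hx]

lemma contDiffAt_potential {x : E} (hx : x ∈ W.domain) : ContDiffAt ℝ 1 W.potential x :=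
  W.contDiffOn_potential.contDiffAt (W.isOpen_domain.mem_nhds hx)

lemma continuousAt_gradient {x : E} (hx : x ∈ W.domain) :
    ContinuousAt (gradient W.potential) x :=
  (InnerProductSpace.toDual ℝ E).symm.continuous.continuousAt.comp
    ((W.contDiffAt_potential hx).continuousAt_fderiv one_ne_zero)

lemma mem_domain_of_infDist_pos {x : E} (hx : 0 < infDist x W.domainᶜ) : x ∈ W.domain := by
  by_contra h
  exact hx.ne' (infDist_zero_of_mem h)

lemma exists_closedBall_potential_le : ∃ p, ∃ r > 0, ∃ u > 0,
    ∀ x ∈ closedBall p r, x ∈ W.domain ∧ W.potential x ≤ -u := by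
  obtain ⟨p, hp, hneg⟩ := W.exists_potential_neg
  have hnear : ∀ᶠ x in 𝓝 p, x ∈ W.domain ∧ W.potential x < W.potential p / 2 :=
    (W.isOpen_domain.eventually_mem hp).and
      ((W.contDiffAt_potential hp).continuousAt.eventually_lt_const (by linarith))
  obtain ⟨r, hr, h⟩ := nhds_basis_closedBall.eventually_iff.1 hnear
  exact ⟨p, r, hr, -W.potential p / 2, by linarith,
    fun x hx ↦ ⟨(h hx).1, by linarith [(h hx).2]⟩⟩

lemma isCompact_le_infDist [FiniteDimensional ℝ E] {d : ℝ} (hd : 0 < d) :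
    IsCompact {x | d ≤ infDist x W.domainᶜ} :=
  isCompact_of_isClosed_isBounded (isClosed_le continuous_const (continuous_infDist_pt _))
    (W.isBounded_domain.subset fun _ hx ↦ W.mem_domain_of_infDist_pos (hd.trans_le hx))

section Compactness

variable [Nontrivial E]

lemma infDist_pos {x : E} (hx : x ∈ W.domain) : 0 < infDist x W.domainᶜ := by
  have hne : W.domainᶜ.Nonempty :=
    nonempty_compl.2 fun h ↦ NormedSpace.unbounded_univ ℝ E (h ▸ W.isBounded_domain)
  exact (W.isOpen_domain.isClosed_compl.notMem_iff_infDist_pos hne).1 (not_not.2 hx)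

lemma exists_forall_le_infDist (s : ℝ) :
    ∃ d > 0, ∀ x ∈ W.domain, W.potential x ≤ s → d ≤ infDist x W.domainᶜ := by
  have hc := W.c_pos
  refine ⟨min 1 (W.c / (|s + W.M| + 1)), by positivity, fun x hx hs ↦ ?_⟩
  have hd := W.infDist_pos hx
  by_contra! hlt
  obtain ⟨hlt₁, hlt₂⟩ := lt_min_iff.1 hlt
  have hpow : infDist x W.domainᶜ ^ 4 ≤ infDist x W.domainᶜ :=
    pow_le_of_le_one hd.le hlt₁.le (by norm_num)
  have : |s + W.M| + 1 < W.c / infDist x W.domainᶜ ^ 4 := by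
    rw [lt_div_iff₀ (by positivity)] at hlt₂ ⊢
    nlinarith [abs_nonneg (s + W.M)]
  linarith [W.strong_force x hx, le_abs_self (s + W.M)]

variable [FiniteDimensional ℝ E]

lemma isCompact_sublevel (s : ℝ) : IsCompact {x | x ∈ W.domain ∧ W.potential x ≤ s} := by
  obtain ⟨d, hd, hle⟩ := W.exists_forall_le_infDist s
  have hclosed : IsClosed ({x | d ≤ infDist x W.domainᶜ} ∩ W.potential ⁻¹' Iic s) :=
    (W.contDiffOn_potential.continuousOn.mono fun _ hx ↦
      W.mem_domain_of_infDist_pos (hd.trans_le hx)).preimage_isClosed_of_isClosed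
        (W.isCompact_le_infDist hd).isClosed isClosed_Iic
  convert (W.isCompact_le_infDist hd).of_isClosed_subset hclosed inter_subset_left using 1
  ext x
  exact ⟨fun hx ↦ ⟨hle x hx.1 hx.2, hx.2⟩,
    fun hx ↦ ⟨W.mem_domain_of_infDist_pos (hd.trans_le hx.1), hx.2⟩⟩

end Compactness

variable [NeZero N]

/-- The discrete Maupertuis functional `kineticEnergy q * meanDepth W.potential q`, truncated at
`0` from below and extended by `0` to polygons which leave the domain. -/
noncomputable def action (q : ZMod N → E) : ℝ :=
  {q : ZMod N → E | ∀ i, q i ∈ W.domain}.indicator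
    (fun q ↦ max 0 (kineticEnergy q * meanDepth W.potential q)) q

variable {q : ZMod N → E}

lemma action_of_mem (hq : ∀ i, q i ∈ W.domain) :
    W.action q = max 0 (kineticEnergy q * meanDepth W.potential q) :=
  indicator_of_mem (s := {q : ZMod N → E | ∀ i, q i ∈ W.domain}) hq _

lemma action_nonneg (q : ZMod N → E) : 0 ≤ W.action q :=
  indicator_nonneg (fun _ _ ↦ le_max_left _ _) q

lemma mem_domain_of_action_pos (hq : 0 < W.action q) (i : ZMod N) : q i ∈ W.domain :=
  mem_of_indicator_ne_zero hq.ne' i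

lemma action_eq_of_pos (hq : 0 < W.action q) :
    W.action q = kineticEnergy q * meanDepth W.potential q := by
  have hmax := W.action_of_mem (W.mem_domain_of_action_pos hq)
  rw [hmax, lt_max_iff, lt_self_iff_false, false_or] at hq
  rw [hmax, max_eq_right hq.le]

lemma meanDepth_pos_of_action_pos (hq : 0 < W.action q) : 0 < meanDepth W.potential q := by
  rw [W.action_eq_of_pos hq] at hq
  exact pos_of_mul_pos_right hq (kineticEnergy_nonneg q)

lemma kineticEnergy_pos_of_action_pos (hq : 0 < W.action q) : 0 < kineticEnergy q := by
  rw [W.action_eq_of_pos hq] at hq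
  exact (kineticEnergy_nonneg q).lt_of_ne (left_ne_zero_of_mul hq.ne').symm

lemma meanDepth_le_M (hq : ∀ i, q i ∈ W.domain) : meanDepth W.potential q ≤ W.M :=
  meanDepth_le fun i ↦ W.neg_M_le (hq i)

lemma contDiffAt_kineticEnergy_mul_meanDepth (hq : ∀ i, q i ∈ W.domain) :
    ContDiffAt ℝ 1 (fun q : ZMod N → E ↦ kineticEnergy q * meanDepth W.potential q) q :=
  _root_.contDiffAt_kineticEnergy_mul_meanDepth fun i ↦ W.contDiffAt_potential (hq i)

lemma continuousAt_maupertuisGradient (hq : ∀ i, q i ∈ W.domain) :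
    ContinuousAt (maupertuisGradient W.potential : (ZMod N → E) → ZMod N → E) q := by
  have hdepth : ContinuousAt (meanDepth W.potential : (ZMod N → E) → ℝ) q := by
    refine (continuousAt_const.mul (tendsto_finsetSum _ fun i _ ↦ ?_)).neg
    exact (W.contDiffAt_potential (hq i)).continuousAt.tendsto.comp
      (continuous_apply i).continuousAt
  refine continuousAt_pi.2 fun i ↦ .sub (.smul (hdepth.mul continuousAt_const) (by fun_prop)) ?_
  exact (continuous_kineticEnergy.continuousAt.div_const _).smul
    ((W.continuousAt_gradient (hq i)).comp (f := fun q : ZMod N → E ↦ q i)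
      (continuous_apply i).continuousAt)

lemma potential_le_of_meanDepth_nonneg (hq : ∀ i, q i ∈ W.domain)
    (hdepth : 0 ≤ meanDepth W.potential q) (i : ZMod N) : W.potential (q i) ≤ N * W.M := by
  have hsingle := Finset.single_le_sum (f := fun j ↦ W.potential (q j) + W.M)
    (fun j _ ↦ by linarith [W.neg_M_le (hq j)]) (Finset.mem_univ i)
  linarith [sum_add_le_mul_of_meanDepth_nonneg hdepth W.M, W.M_pos]

section Regularity

variable [Nontrivial E] [FiniteDimensional ℝ E]

lemma exists_isCompact_action_pos_subset : ∃ s : Set (ZMod N → E), IsCompact s ∧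
    (∀ q ∈ s, ∀ i, q i ∈ W.domain) ∧ ∀ q, 0 < W.action q → q ∈ s :=
  ⟨univ.pi fun _ ↦ {x | x ∈ W.domain ∧ W.potential x ≤ N * W.M},
    isCompact_univ_pi fun _ ↦ W.isCompact_sublevel _, fun _ hq i ↦ (hq i (mem_univ i)).1,
    fun _ hq i _ ↦ ⟨W.mem_domain_of_action_pos hq i, W.potential_le_of_meanDepth_nonneg
      (W.mem_domain_of_action_pos hq) (W.meanDepth_pos_of_action_pos hq).le i⟩⟩

lemma continuous_action : Continuous (W.action : (ZMod N → E) → ℝ) := by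
  obtain ⟨s, hs, hsub, hpos⟩ := W.exists_isCompact_action_pos_subset (N := N)
  refine continuous_iff_continuousAt.2 fun q ↦ ?_
  by_cases hq : q ∈ s
  · have hmem : ∀ᶠ q' in 𝓝 q, ∀ i, q' i ∈ W.domain := eventually_all.2 fun i ↦
      (continuous_apply i).continuousAt.eventually (W.isOpen_domain.eventually_mem (hsub q hq i))
    have hcont : ContinuousAt (fun q ↦ max 0 (kineticEnergy q * meanDepth W.potential q)) q :=
      continuousAt_const.max
        (W.contDiffAt_kineticEnergy_mul_meanDepth (hsub q hq)).continuousAt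
    exact hcont.congr (hmem.mono fun q' hq' ↦ (W.action_of_mem hq').symm)
  · refine (continuousAt_const (y := 0)).congr ?_
    filter_upwards [hs.isClosed.isOpen_compl.mem_nhds hq] with q' hq'
    exact ((W.action_nonneg q').eq_of_not_lt fun h ↦ hq' (hpos q' h))

lemma isCompact_action_preimage_Icc {a : ℝ} (ha : 0 < a) (b : ℝ) :
    IsCompact (W.action ⁻¹' Icc a b : Set (ZMod N → E)) := by
  obtain ⟨s, hs, -, hpos⟩ := W.exists_isCompact_action_pos_subset (N := N)
  exact hs.of_isClosed_subset (isClosed_Icc.preimage W.continuous_action)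
    fun q hq ↦ hpos q (ha.trans_le hq.1)

lemma action_eventuallyEq (hq : 0 < W.action q) :
    W.action =ᶠ[𝓝 q] fun q ↦ kineticEnergy q * meanDepth W.potential q :=
  (W.continuous_action.continuousAt.eventually_const_lt hq).mono fun _ ↦ W.action_eq_of_pos

lemma contDiffAt_action (hq : 0 < W.action q) : ContDiffAt ℝ 1 W.action q :=
  (W.contDiffAt_kineticEnergy_mul_meanDepth (W.mem_domain_of_action_pos hq)).congr_of_eventuallyEq
    (W.action_eventuallyEq hq)

lemma fderiv_action_maupertuisGradient_pos (hq : 0 < W.action q)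
    (hgrad : maupertuisGradient W.potential q ≠ 0) :
    0 < fderiv ℝ W.action q (maupertuisGradient W.potential q) := by
  have hdiff (i : ZMod N) : DifferentiableAt ℝ W.potential (q i) :=
    (W.contDiffAt_potential (W.mem_domain_of_action_pos hq i)).differentiableAt one_ne_zero
  rw [(W.action_eventuallyEq hq).fderiv_eq, fderiv_kineticEnergy_mul_meanDepth_apply hdiff]
  obtain ⟨i, hi⟩ := Function.ne_iff.1 hgrad
  exact Finset.sum_pos' (fun _ _ ↦ real_inner_self_nonneg)
    ⟨i, Finset.mem_univ i, real_inner_self_pos.2 hi⟩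

end Regularity

section CriticalPolygons

variable {v : E} {x : E × ℝ} {R : ℝ}

lemma norm_lt_of_action_segmentLoop_pos (hR : W.domain ⊆ ball 0 R) (hv : ‖v‖ = 1) (hN : 2 ≤ N)
    (hx : 0 < W.action (segmentLoop v x : ZMod N → E)) : ‖x‖ < 8 * R := by
  obtain ⟨j, hj⟩ := exists_quarter_le_tent hN
  have hvertex (i : ZMod N) : ‖segmentLoop v x i‖ < R :=
    mem_ball_zero_iff.1 (hR (W.mem_domain_of_action_pos hx i))
  have hstart : ‖x.1‖ < R := segmentLoop_zero (N := N) v x ▸ hvertex 0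
  have hlength : ‖x.2‖ * tent j ≤ ‖segmentLoop v x j‖ + ‖x.1‖ := by
    simpa [segmentLoop, norm_smul, hv, abs_of_nonneg (tent_nonneg j)] using
      norm_sub_le (segmentLoop v x j) x.1
  have : ‖x.2‖ * (1 / 4) ≤ ‖x.2‖ * tent j := by gcongr
  have := hvertex j
  rw [Prod.norm_def]
  exact max_lt (by linarith [norm_nonneg x.1]) (by linarith)

lemma action_segmentLoop_le (hR : W.domain ⊆ ball 0 R) (hv : ‖v‖ = 1) (hN : 2 ≤ N) :
    W.action (segmentLoop v x : ZMod N → E) ≤ (8 * R) ^ 2 / 2 * W.M := by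
  have hM := W.M_pos
  rcases (W.action_nonneg (segmentLoop v x : ZMod N → E)).eq_or_lt with h | h
  · rw [← h]; positivity
  have hx₂ : x.2 ^ 2 ≤ (8 * R) ^ 2 := by
    rw [← sq_abs]
    gcongr
    exact (norm_snd_le x).trans (W.norm_lt_of_action_segmentLoop_pos hR hv hN h).le
  rw [W.action_eq_of_pos h]
  have hdepth := W.meanDepth_pos_of_action_pos h
  calc _ ≤ x.2 ^ 2 / 2 * W.M := by
        gcongr
        exacts [kineticEnergy_segmentLoop_le hv x, W.meanDepth_le_M (W.mem_domain_of_action_pos h)]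
    _ ≤ (8 * R) ^ 2 / 2 * W.M := by gcongr

variable [FiniteDimensional ℝ E]

lemma exists_forall_le_action_segmentLoop : ∃ α > 0, ∀ (N : ℕ) [NeZero N], 2 ≤ N →
    ∀ v : E, ‖v‖ = 1 → ∀ H : (ZMod N → E) → ZMod N → E, Continuous H →
      (∀ q, W.action q = 0 → H q = q) → ∃ x, α ≤ W.action (H (segmentLoop v x)) := by
  obtain ⟨p, r, hr, u, hu, hball⟩ := W.exists_closedBall_potential_le
  obtain ⟨R, hR⟩ := W.isBounded_domain.subset_ball (0 : E)
  refine ⟨r ^ 2 / 2 * u, by positivity, fun N _ hN v hv H hH hid ↦ ?_⟩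
  have hfixed (x : E × ℝ) (hx : x ∉ ball 0 (8 * R) ∨ x.2 = 0) :
      H (segmentLoop v x) = segmentLoop v x := by
    refine hid _ ((W.action_nonneg _).eq_of_not_lt fun hpos ↦ ?_).symm
    rcases hx with hx | hx
    · exact hx (mem_ball_zero_iff.2 (W.norm_lt_of_action_segmentLoop_pos hR hv hN hpos))
    · have := W.kineticEnergy_pos_of_action_pos hpos
      rw [kineticEnergy_segmentLoop, hx] at this
      simp at this
  obtain ⟨x, hstart, henergy⟩ := exists_apply_segmentLoop_eq (k := r ^ 2 / 2)
    (ne_zero_of_norm_ne_zero (hv ▸ one_ne_zero)) hN hH isBounded_ball hfixed p (by positivity)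
  have hnear (i : ZMod N) : H (segmentLoop v x) i ∈ closedBall p r := by
    have := sq_norm_sub_le_two_mul_kineticEnergy (H (segmentLoop v x)) i 0
    rw [hstart, henergy, mul_div_cancel₀ _ two_ne_zero] at this
    exact mem_closedBall_iff_norm.2 (abs_le_of_sq_le_sq' this hr.le).2
  refine ⟨x, ?_⟩
  rw [W.action_of_mem fun i ↦ (hball _ (hnear i)).1, henergy]
  refine le_max_of_le_right ?_
  gcongr
  exact le_meanDepth fun i ↦ (hball _ (hnear i)).2

lemma exists_maupertuisGradient_eq_zero [Nontrivial E] : ∃ α > 0, ∃ β, ∀ (N : ℕ) [NeZero N],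
    2 ≤ N → ∃ q : ZMod N → E,
      α ≤ W.action q ∧ W.action q ≤ β ∧ maupertuisGradient W.potential q = 0 := by
  obtain ⟨α, hα, hlink⟩ := W.exists_forall_le_action_segmentLoop
  obtain ⟨R, hR⟩ := W.isBounded_domain.subset_ball (0 : E)
  obtain ⟨v, hv⟩ := exists_norm_eq E zero_le_one
  refine ⟨α / 2, half_pos hα, (8 * R) ^ 2 / 2 * W.M, fun N _ hN ↦ ?_⟩
  by_contra! hregular
  have hpos (q : ZMod N → E) (hq : α / 2 < W.action q) : 0 < W.action q := (half_pos hα).trans hq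
  obtain ⟨H, hH, hid, hlow⟩ := exists_continuous_deformation_lt (half_lt_self hα)
    W.continuous_action (fun q hq ↦ W.contDiffAt_action (hpos q hq))
    (fun q hq ↦ W.continuousAt_maupertuisGradient (W.mem_domain_of_action_pos (hpos q hq)))
    (W.isCompact_action_preimage_Icc (half_pos hα) _)
    (fun q hq hle ↦ W.fderiv_action_maupertuisGradient_pos (hpos q hq) (hregular q hq.le hle))
  obtain ⟨x, hx⟩ := hlink N hN v hv H hH fun q hq ↦ hid q (hq.trans_le (half_pos hα).le)
  exact (hlow _ (W.action_segmentLoop_le hR hv hN)).not_ge hx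

end CriticalPolygons

section Bounds

lemma kineticEnergy_mul_δ_le (hq : 0 < W.action q)
    (hcrit : maupertuisGradient W.potential q = 0) :
    kineticEnergy q * W.δ ≤ (2 * W.L + 1) * W.action q := by
  have hN : (0 : ℝ) < N := mod_cast NeZero.pos N
  have hmem := W.mem_domain_of_action_pos hq
  have hdepth := W.meanDepth_pos_of_action_pos hq
  have hkinetic := W.kineticEnergy_pos_of_action_pos hq
  have hstationary := sum_inner_maupertuisGradient W.potential q fun i ↦ W.field (q i)
  simp only [hcrit, Pi.zero_apply, inner_zero_left, Finset.sum_const_zero] at hstationary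
  have hcontact : N * (W.δ - meanDepth W.potential q) ≤
      ∑ i, inner ℝ (gradient W.potential (q i)) (W.field (q i)) := by
    have := Finset.sum_le_sum fun i (_ : i ∈ Finset.univ) ↦ W.contact _ (hmem i)
    rw [Finset.sum_add_distrib, sum_eq_neg_mul_meanDepth W.potential, Finset.sum_const,
      Finset.card_univ, ZMod.card, nsmul_eq_mul] at this
    linarith
  have hfield : ∑ i, inner ℝ (q (i + 1) - q i) (W.field (q (i + 1)) - W.field (q i)) ≤
      W.L * ∑ i, ‖q (i + 1) - q i‖ ^ 2 := by
    rw [Finset.mul_sum]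
    refine Finset.sum_le_sum fun i _ ↦ (real_inner_le_norm _ _).trans ?_
    have := W.lipschitzOnWith_field.norm_sub_le (hmem (i + 1)) (hmem i)
    nlinarith [norm_nonneg (q (i + 1) - q i)]
  have hforce : kineticEnergy q * (W.δ - meanDepth W.potential q) ≤
      2 * W.L * (kineticEnergy q * meanDepth W.potential q) :=
    calc kineticEnergy q * (W.δ - meanDepth W.potential q)
        = kineticEnergy q / N * (N * (W.δ - meanDepth W.potential q)) := by field_simp
      _ ≤ meanDepth W.potential q * N *
          ∑ i, inner ℝ (q (i + 1) - q i) (W.field (q (i + 1)) - W.field (q i)) := by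
        rw [sub_eq_zero.1 hstationary.symm]; gcongr
      _ ≤ meanDepth W.potential q * N * (W.L * ∑ i, ‖q (i + 1) - q i‖ ^ 2) := by gcongr
      _ = 2 * W.L * (kineticEnergy q * meanDepth W.potential q) := by rw [kineticEnergy]; ring
  rw [W.action_eq_of_pos hq]
  linarith

variable [Nontrivial E]

lemma c_le_mul_infDist_sq (hq : ∀ i, q i ∈ W.domain) (hdepth : 0 ≤ meanDepth W.potential q)
    {i : ZMod N} (hi : infDist (q i) W.domainᶜ < 1) :
    W.c ≤ W.M * (1 + √(2 * kineticEnergy q)) ^ 4 * infDist (q i) W.domainᶜ ^ 2 := by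
  set d := infDist (q i) W.domainᶜ
  set B := 1 + √(2 * kineticEnergy q)
  have hN : (0 : ℝ) < N := mod_cast NeZero.pos N
  have hd : 0 < d := W.infDist_pos (hq i)
  have hc := W.c_pos
  have hk : ⌊d ^ 2 * N⌋₊ < N := (Nat.floor_lt (by positivity)).2 <|
    mul_lt_of_lt_one_left hN (pow_lt_one₀ hd.le hi two_ne_zero)
  have hforce : ∀ l ∈ Finset.range (⌊d ^ 2 * N⌋₊ + 1),
      W.c / (d * B) ^ 4 ≤ W.potential (q (i + l)) + W.M := by
    intro l hl
    have hl : l ≤ ⌊d ^ 2 * N⌋₊ := Nat.lt_succ_iff.1 (Finset.mem_range.1 hl)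
    have hclose : infDist (q (i + l)) W.domainᶜ ≤ d * B :=
      infDist_add_natCast_le _ q (hl.trans hk.le) ((Nat.le_floor_iff (by positivity)).1 hl)
    have hpos := W.infDist_pos (hq (i + l))
    calc W.c / (d * B) ^ 4 ≤ W.c / infDist (q (i + l)) W.domainᶜ ^ 4 := by gcongr
      _ ≤ W.potential (q (i + l)) + W.M := by linarith [W.strong_force _ (hq (i + l))]
  have hsum : N * (W.c / (d ^ 2 * B ^ 4)) ≤ N * W.M :=
    calc N * (W.c / (d ^ 2 * B ^ 4)) = d ^ 2 * N * (W.c / (d * B) ^ 4) := by field_simp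
      _ ≤ (⌊d ^ 2 * N⌋₊ + 1 : ℕ) * (W.c / (d * B) ^ 4) := by
        gcongr; exact_mod_cast (Nat.lt_floor_add_one _).le
      _ ≤ ∑ l ∈ Finset.range (⌊d ^ 2 * N⌋₊ + 1), (W.potential (q (i + l)) + W.M) := by
        simpa using Finset.card_nsmul_le_sum _ _ _ hforce
      _ ≤ ∑ j, (W.potential (q j) + W.M) :=
        sum_range_natCast_add_le_sum (f := fun j ↦ W.potential (q j) + W.M)
          (fun j ↦ by linarith [W.neg_M_le (hq j)]) i hk
      _ ≤ N * W.M := sum_add_le_mul_of_meanDepth_nonneg hdepth W.M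
  have := (div_le_iff₀ (by positivity)).1 (le_of_mul_le_mul_left hsum hN)
  linarith

lemma exists_forall_le_infDist_of_kineticEnergy_le (K : ℝ) : ∃ d > 0, ∀ (N : ℕ) [NeZero N]
    (q : ZMod N → E), (∀ i, q i ∈ W.domain) → 0 ≤ meanDepth W.potential q →
      kineticEnergy q ≤ K → ∀ i, d ≤ infDist (q i) W.domainᶜ := by
  have hc := W.c_pos
  have hM := W.M_pos
  refine ⟨min 1 √(W.c / (W.M * (1 + √(2 * K)) ^ 4)), by positivity, fun N _ q hq hdepth hK i ↦ ?_⟩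
  rcases le_or_gt 1 (infDist (q i) W.domainᶜ) with hi | hi
  · exact min_le_of_left_le hi
  refine min_le_of_right_le (Real.sqrt_le_left infDist_nonneg |>.2 ?_)
  rw [div_le_iff₀' (by positivity)]
  refine (W.c_le_mul_infDist_sq hq hdepth hi).trans ?_
  gcongr

end Bounds

lemma exists_discrete_newton [FiniteDimensional ℝ E] [Nontrivial E] :
    ∃ s : Set E, IsCompact s ∧ s ⊆ W.domain ∧ ∃ K, ∃ a > 0, ∃ b, ∀ (N : ℕ) [NeZero N], 2 ≤ N →
      ∃ q : ZMod N → E, ∃ l ∈ Icc a b, (∀ i, q i ∈ s) ∧ kineticEnergy q ≤ K ∧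
        kineticEnergy q = l * meanDepth W.potential q ∧
        ∀ i, (N : ℝ) • (q (i + 1) - q i) - (N : ℝ) • (q i - q (i - 1)) =
          -((l / N) • gradient W.potential (q i)) := by
  obtain ⟨α, hα, β, hcrit⟩ := W.exists_maupertuisGradient_eq_zero
  have hδ := W.δ_pos
  have hM := W.M_pos
  set K := (2 * W.L + 1) * β / W.δ
  obtain ⟨d, hd, hdist⟩ := W.exists_forall_le_infDist_of_kineticEnergy_le K
  refine ⟨_, W.isCompact_le_infDist hd, fun x hx ↦ W.mem_domain_of_infDist_pos (hd.trans_le hx),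
    K, α / W.M / W.M, by positivity, K / (α / K), fun N _ hN ↦ ?_⟩
  obtain ⟨q, hαq, hβq, hgrad⟩ := hcrit N hN
  have hpos : 0 < W.action q := hα.trans_le hαq
  have hmem := W.mem_domain_of_action_pos hpos
  have hdepth := W.meanDepth_pos_of_action_pos hpos
  have hkinetic := W.kineticEnergy_pos_of_action_pos hpos
  have hK : kineticEnergy q ≤ K := (le_div_iff₀ hδ).2 <|
    (W.kineticEnergy_mul_δ_le hpos hgrad).trans (by gcongr)
  have hKpos : 0 < K := hkinetic.trans_le hK
  rw [W.action_eq_of_pos hpos] at hαq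
  have hkinetic_ge : α / W.M ≤ kineticEnergy q := (div_le_iff₀ hM).2 <|
    hαq.trans (by gcongr; exact W.meanDepth_le_M hmem)
  have hdepth_ge : α / K ≤ meanDepth W.potential q := (div_le_iff₀' hKpos).2 <|
    hαq.trans (by gcongr)
  refine ⟨q, kineticEnergy q / meanDepth W.potential q, ⟨?_, ?_⟩,
    hdist N q hmem hdepth.le hK, hK, by field_simp,
    discrete_newton_of_maupertuisGradient_eq_zero hdepth.ne' hgrad⟩
  · gcongr
    exact W.meanDepth_le_M hmem
  · gcongr

end PotentialWell

end Wells

section GridLimits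

open Filter Topology

lemma norm_sub_sub_zsmul_le {E : Type*} [SeminormedAddCommGroup E]
    [NormedSpace ℝ E] {f : ℤ → E} {g : E} {B : ℝ} {i j : ℤ}
    (h : ∀ k ∈ uIcc i j, ‖f (k + 1) - f k - g‖ ≤ B) :
    ‖f j - f i - ((j : ℝ) - i) • g‖ ≤ |(j : ℝ) - i| * B := by
  wlog hij : i ≤ j generalizing i j
  · have := this (uIcc_comm i j ▸ h) (le_of_not_ge hij)
    rw [← norm_neg, abs_sub_comm]
    convert this using 1
    congr 1
    module
  rw [uIcc_of_le hij] at h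
  rw [abs_of_nonneg (sub_nonneg.2 (Int.cast_le.2 hij))]
  induction j, hij using Int.leInduction with
  | base => simp
  | succ j hij ih =>
    have hj := ih fun k hk ↦ h k ⟨hk.1, hk.2.trans (by lia)⟩
    calc _ = ‖(f j - f i - ((j : ℝ) - i) • g) + (f (j + 1) - f j - g)‖ := by
          congr 1; push_cast; module
      _ ≤ ((j : ℝ) - i) * B + B := norm_add_le_of_le hj (h j ⟨hij, by lia⟩)
      _ = _ := by push_cast; ring

lemma norm_sub_le_abs_mul_of_norm_add_one_sub_le {E : Type*} [SeminormedAddCommGroup E]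
    [NormedSpace ℝ E] {f : ℤ → E} {B : ℝ} (h : ∀ k, ‖f (k + 1) - f k‖ ≤ B) (i j : ℤ) :
    ‖f j - f i‖ ≤ |(j : ℝ) - i| * B := by
  simpa using norm_sub_sub_zsmul_le (f := f) (B := B) (g := 0) (i := i) (j := j)
    fun k _ ↦ by simpa using h k

variable {ι X Y : Type*} [TopologicalSpace X] [TopologicalSpace Y] {N : ι → ℕ} {t : ℝ}

/-- The filter of pairs `(n, j)` with `n` going to infinity along `U` and the grid point `j / N n`
going to `t`. -/
noncomputable def gridNhds (U : Filter ι) (N : ι → ℕ) (t : ℝ) : Filter (ι × ℤ) :=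
  comap (fun p ↦ (p.1, (p.2 / N p.1 : ℝ))) (U ×ˢ 𝓝 t)

/-- The functions `j / N n ↦ f n j` on the grids `ℤ / N n` converge continuously to `F` along
`U`. -/
def IsGridLimit (U : Filter ι) (N : ι → ℕ) (f : ι → ℤ → X) (F : ℝ → X) : Prop :=
  ∀ t, Tendsto (fun p : ι × ℤ ↦ f p.1 p.2) (gridNhds U N t) (𝓝 (F t))

section Filter

variable {U : Filter ι} {f : ι → ℤ → X} {F : ℝ → X}

lemma tendsto_fst_gridNhds : Tendsto Prod.fst (gridNhds U N t) U :=
  (tendsto_fst (g := 𝓝 t)).comp tendsto_comap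

lemma tendsto_div_gridNhds : Tendsto (fun p ↦ (p.2 / N p.1 : ℝ)) (gridNhds U N t) (𝓝 t) :=
  (tendsto_snd (f := U)).comp tendsto_comap

lemma tendsto_gridNhds {α : Type*} {l : Filter α} {n : α → ι} {j : α → ℤ} (hn : Tendsto n l U)
    (hj : Tendsto (fun a ↦ (j a / N (n a) : ℝ)) l (𝓝 t)) :
    Tendsto (fun a ↦ (n a, j a)) l (gridNhds U N t) :=
  tendsto_comap_iff.2 (hn.prodMk hj)

lemma IsGridLimit.tendsto (h : IsGridLimit U N f F) {j : ι → ℤ}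
    (hj : Tendsto (fun n ↦ (j n / N n : ℝ)) U (𝓝 t)) :
    Tendsto (fun n ↦ f n (j n)) U (𝓝 (F t)) :=
  (h t).comp (tendsto_gridNhds tendsto_id hj)

lemma IsGridLimit.comp_continuousOn (h : IsGridLimit U N f F) {s : Set X} {φ : X → Y}
    (hφ : ContinuousOn φ s) (hf : ∀ n j, f n j ∈ s) (hF : ∀ t, F t ∈ s) :
    IsGridLimit U N (fun n j ↦ φ (f n j)) (fun t ↦ φ (F t)) := fun t ↦
  (hφ _ (hF t)).tendsto.comp (tendsto_nhdsWithin_iff.2 ⟨h t, .of_forall fun _ ↦ hf _ _⟩)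

lemma IsGridLimit.exists_eventually_dist_le {X : Type*} [PseudoMetricSpace X] {f : ι → ℤ → X}
    {F : ℝ → X} (h : IsGridLimit U N f F) (t : ℝ) {ε : ℝ} (hε : 0 < ε) :
    ∃ δ > 0, ∀ᶠ n in U, ∀ j : ℤ, (j / N n : ℝ) ∈ Metric.ball t δ → dist (f n j) (F t) ≤ ε := by
  obtain ⟨s, hs, hsub⟩ := mem_comap.1 (h t (Metric.closedBall_mem_nhds _ hε))
  obtain ⟨A, hA, I, hI, hAI⟩ := mem_prod_iff.1 hs
  obtain ⟨δ, hδ, hball⟩ := Metric.mem_nhds_iff.1 hI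
  refine ⟨δ, hδ, ?_⟩
  filter_upwards [hA] with n hn j hj using hsub (a := (n, j)) (hAI ⟨hn, hball hj⟩)

lemma tendsto_floor_mul_div (hN : Tendsto N U atTop) (t : ℝ) :
    Tendsto (fun n ↦ (⌊t * N n⌋ / N n : ℝ)) U (𝓝 t) := by
  have hinv : Tendsto (fun n ↦ t - (1 / N n : ℝ)) U (𝓝 t) := by
    simpa using (tendsto_one_div_atTop_nhds_zero_nat.comp hN).const_sub t
  refine tendsto_of_tendsto_of_tendsto_of_le_of_le' hinv tendsto_const_nhds ?_ ?_ <;>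
    filter_upwards [hN.eventually_gt_atTop 0] with n hn <;>
    have hn : (0 : ℝ) < N n := Nat.cast_pos.2 hn
  · rw [le_div_iff₀ hn, sub_mul, one_div_mul_cancel hn.ne']
    exact (Int.sub_one_lt_floor _).le
  · exact (div_le_iff₀ hn).2 (Int.floor_le _)

lemma IsGridLimit.add_one (hN : Tendsto N U atTop) (h : IsGridLimit U N f F) :
    IsGridLimit U N (fun n j ↦ f n (j + 1)) F := fun t ↦ by
  have hinv : Tendsto (fun p : ι × ℤ ↦ (1 / N p.1 : ℝ)) (gridNhds U N t) (𝓝 0) :=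
    tendsto_one_div_atTop_nhds_zero_nat.comp (hN.comp tendsto_fst_gridNhds)
  have hshift := tendsto_gridNhds (j := fun p : ι × ℤ ↦ p.2 + 1) tendsto_fst_gridNhds
    (by simpa [add_div] using tendsto_div_gridNhds.add hinv)
  exact (h t).comp hshift

lemma IsGridLimit.periodic [T2Space X] [U.NeBot] (hN : Tendsto N U atTop)
    (h : IsGridLimit U N f F) (hf : ∀ n, Function.Periodic (f n) (N n)) :
    Function.Periodic F 1 := fun t ↦ by
  refine tendsto_nhds_unique (h.tendsto (tendsto_floor_mul_div hN (t + 1))) ?_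
  refine (h.tendsto (tendsto_floor_mul_div hN t)).congr fun n ↦ ?_
  rw [add_mul, one_mul, Int.floor_add_natCast, hf]

lemma IsGridLimit.hasDerivAt [U.NeBot] {E : Type*} [NormedAddCommGroup E] [NormedSpace ℝ E]
    {f g : ι → ℤ → E} {F G : ℝ → E} (hN : Tendsto N U atTop) (hf : IsGridLimit U N f F)
    (hg : IsGridLimit U N g G) (hfg : ∀ n j, f n (j + 1) - f n j = (1 / N n : ℝ) • g n j) (t : ℝ) :
    HasDerivAt F (G t) t := by
  rw [hasDerivAt_iff_isLittleO, Asymptotics.isLittleO_iff]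
  intro ε hε
  obtain ⟨δ, hδ, hclose⟩ := hg.exists_eventually_dist_le t hε
  filter_upwards [Metric.ball_mem_nhds t hδ] with u hu
  have ht := tendsto_floor_mul_div hN t
  have hu' := tendsto_floor_mul_div hN u
  refine le_of_tendsto_of_tendsto
    (((hf.tendsto hu').sub (hf.tendsto ht)).sub ((hu'.sub ht).smul_const (G t))).norm
    ((hu'.sub ht).norm.const_mul ε) ?_
  filter_upwards [hclose, ht (Metric.ball_mem_nhds t hδ), hu' (Metric.isOpen_ball.mem_nhds hu),
    hN.eventually_gt_atTop 0] with n hcl hnt hnu hn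
  have : (0 : ℝ) < N n := Nat.cast_pos.2 hn
  have hstep : ∀ k ∈ uIcc ⌊t * N n⌋ ⌊u * N n⌋,
      ‖f n (k + 1) - f n k - (1 / N n : ℝ) • G t‖ ≤ 1 / N n * ε := fun k hk ↦ by
    have hk' : (k / N n : ℝ) ∈ uIcc (⌊t * N n⌋ / N n : ℝ) (⌊u * N n⌋ / N n) := by
      rw [mem_uIcc] at hk ⊢
      exact hk.imp (fun h ↦ ⟨by gcongr; exact h.1, by gcongr; exact h.2⟩)
        (fun h ↦ ⟨by gcongr; exact h.1, by gcongr; exact h.2⟩)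
    have hgk : dist (g n k) (G t) ≤ ε :=
      hcl k ((convex_ball t δ).ordConnected.uIcc_subset hnt hnu hk')
    rw [hfg, ← smul_sub, norm_smul, Real.norm_of_nonneg (by positivity), ← dist_eq_norm]
    gcongr
  rw [← sub_div, norm_div, Real.norm_natCast, Real.norm_eq_abs, div_eq_mul_one_div, mul_smul]
  exact (norm_sub_sub_zsmul_le hstep).trans_eq (by ring)

end Filter

section Ultrafilter

variable {U : Ultrafilter ι}

lemma exists_mem_tendsto_of_isCompact {s : Set X} (hs : IsCompact s) {f : ι → X}
    (hf : ∀ n, f n ∈ s) : ∃ x ∈ s, Tendsto f U (𝓝 x) :=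
  hs.ultrafilter_le_nhds (U.map f) (tendsto_principal.2 (.of_forall hf))

lemma exists_isGridLimit {E : Type*} [NormedAddCommGroup E] [NormedSpace ℝ E] {s : Set E}
    (hN : Tendsto N U atTop) (hs : IsCompact s) {f : ι → ℤ → E} (hf : ∀ n j, f n j ∈ s) {A : ℝ}
    (hA : ∀ n j, ‖f n (j + 1) - f n j‖ ≤ A / N n) :
    ∃ F : ℝ → E, (∀ t, F t ∈ s) ∧ IsGridLimit U N f F := by
  choose F hFs hF using fun t : ℝ ↦
    exists_mem_tendsto_of_isCompact (U := U) hs fun n ↦ hf n ⌊t * N n⌋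
  refine ⟨F, hFs, fun t ↦ ?_⟩
  have hfloor := (tendsto_floor_mul_div hN t).comp (tendsto_fst_gridNhds (N := N) (t := t))
  have hgap : Tendsto (fun p : ι × ℤ ↦ |(p.2 / N p.1 : ℝ) - ⌊t * N p.1⌋ / N p.1| * A)
      (gridNhds U N t) (𝓝 0) := by
    simpa using (tendsto_div_gridNhds.sub hfloor).abs.mul_const A
  refine ((hF t).comp tendsto_fst_gridNhds).congr_dist (squeeze_zero (fun _ ↦ dist_nonneg)
    (fun p ↦ ?_) hgap)
  rw [Function.comp_apply, dist_comm, dist_eq_norm, ← sub_div, abs_div, Nat.abs_cast,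
    div_mul_eq_mul_div, ← mul_div_assoc']
  exact norm_sub_le_abs_mul_of_norm_add_one_sub_le (hA p.1) _ _

lemma IsGridLimit.exists_mem_of_isClosed {f : ι → ℤ → X} {F : ℝ → X} {s : Set X}
    (h : IsGridLimit U N f F) (hs : IsClosed s)
    (hf : ∀ n, ∃ j : ℕ, j < N n ∧ f n j ∈ s) : ∃ t, F t ∈ s := by
  choose j hj hjs using hf
  obtain ⟨t, -, ht⟩ := exists_mem_tendsto_of_isCompact (U := U) (isCompact_Icc (a := (0 : ℝ))
    (b := 1)) (f := fun n ↦ (j n : ℤ) / N n) fun n ↦ ⟨by positivity, by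
      simpa using div_le_one_of_le₀ (Nat.cast_le.2 (hj n).le) (Nat.cast_nonneg (N n))⟩
  exact ⟨t, hs.mem_of_tendsto (h.tendsto ht) (.of_forall hjs)⟩

end Ultrafilter

end GridLimits

section DiscreteNewton

open Filter Metric Topology

variable {E : Type*} [NormedAddCommGroup E] [InnerProductSpace ℝ E]

/-- The velocity of the polygon `q` on its `i`-th edge when it is run through in time `1`. -/
noncomputable def momentum {N : ℕ} (q : ZMod N → E) (i : ZMod N) : E := (N : ℝ) • (q (i + 1) - q i)

section Polygon

variable {N : ℕ} [NeZero N]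

lemma sum_sq_norm_momentum (q : ZMod N → E) :
    ∑ i, ‖momentum q i‖ ^ 2 = 2 * N * kineticEnergy q := by
  simp only [momentum, kineticEnergy, norm_smul, mul_pow, Real.norm_natCast, ← Finset.mul_sum]
  ring

lemma sum_momentum_energy (w : E → ℝ) (q : ZMod N → E) (l : ℝ) :
    ∑ i, (‖momentum q i‖ ^ 2 / 2 + l * w (q i)) =
      N * (kineticEnergy q - l * meanDepth w q) := by
  rw [Finset.sum_add_distrib, ← Finset.sum_div, ← Finset.mul_sum, sum_sq_norm_momentum,
    sum_eq_neg_mul_meanDepth]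
  ring

lemma sub_eq_smul_momentum (q : ZMod N → E) (i : ZMod N) :
    q (i + 1) - q i = (1 / N : ℝ) • momentum q i := by
  rw [momentum, smul_smul, one_div_mul_cancel (NeZero.ne _), one_smul]

lemma norm_momentum_le {q : ZMod N → E} {K A : ℝ} (hK : kineticEnergy q ≤ K)
    (hA : ∀ i, ‖momentum q (i + 1) - momentum q i‖ ≤ A / N) (i : ZMod N) :
    ‖momentum q i‖ ≤ √(2 * K) + A := by
  have hN : (0 : ℝ) < N := Nat.cast_pos.2 (NeZero.pos N)
  obtain ⟨i₀, -, hi₀⟩ : ∃ i₀ ∈ Finset.univ, ‖momentum q i₀‖ ^ 2 ≤ 2 * K := by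
    refine Finset.exists_le_of_sum_le Finset.univ_nonempty ?_
    simp only [sum_sq_norm_momentum, Finset.sum_const, Finset.card_univ, ZMod.card, nsmul_eq_mul]
    nlinarith
  have hdiff : ‖momentum q i - momentum q i₀‖ ≤ (i - i₀).val * (A / N) := by
    simpa only [Int.cast_zero, add_zero, Int.cast_natCast, ZMod.natCast_zmod_val, sub_zero,
      add_sub_cancel, Nat.abs_cast] using norm_sub_le_abs_mul_of_norm_add_one_sub_le
      (f := fun j : ℤ ↦ momentum q (i₀ + j)) (B := A / N)
      (fun j ↦ by simpa [add_assoc] using hA (i₀ + j)) 0 (i - i₀).val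
  have hval : (i - i₀).val * (A / N) ≤ A := by
    calc _ ≤ N * (A / N) := by
          gcongr
          · exact (norm_nonneg _).trans (hA i)
          · exact (ZMod.val_lt _).le
      _ = A := mul_div_cancel₀ _ hN.ne'
  calc ‖momentum q i‖ ≤ ‖momentum q i₀‖ + ‖momentum q i - momentum q i₀‖ :=
        norm_le_norm_add_norm_sub' _ _
    _ ≤ _ := add_le_add (Real.le_sqrt_of_sq_le hi₀) (hdiff.trans hval)

end Polygon

variable {ι : Type*} {U : Ultrafilter ι} {N : ι → ℕ}

lemma exists_norm_momentum_sub_le {s : Set E} (hs : IsCompact s) {g : E → E}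
    (hg : ContinuousOn g s) {a b : ℝ} {l : ι → ℝ} (hl : ∀ n, l n ∈ Icc a b)
    {q : ∀ n, ZMod (N n) → E} (hqs : ∀ n i, q n i ∈ s)
    (hnewton : ∀ n i, momentum (q n) (i + 1) - momentum (q n) i =
      -((l n / N n) • g (q n (i + 1)))) :
    ∃ A, ∀ n i, ‖momentum (q n) (i + 1) - momentum (q n) i‖ ≤ A / N n := by
  obtain ⟨A, hA⟩ := (isCompact_Icc.prod hs).exists_bound_of_continuousOn
    (f := fun p : ℝ × E ↦ p.1 • g p.2)
    (continuousOn_fst.smul (hg.comp continuousOn_snd fun p hp ↦ hp.2))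
  refine ⟨A, fun n i ↦ ?_⟩
  rw [hnewton, norm_neg, div_eq_inv_mul, mul_smul, norm_smul, norm_inv, Real.norm_natCast,
    div_eq_inv_mul]
  gcongr
  exact hA (l n, _) ⟨hl n, hqs n _⟩

variable [∀ n, NeZero (N n)]

lemma IsGridLimit.exists_nonpos_of_sum_nonpos {f : ∀ n, ZMod (N n) → ℝ} {F : ℝ → ℝ}
    (h : IsGridLimit U N (fun n j ↦ f n j) F) (hf : ∀ n, ∑ i, f n i ≤ 0) : ∃ t, F t ≤ 0 :=
  h.exists_mem_of_isClosed isClosed_Iic fun n ↦ by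
    obtain ⟨i, -, hi⟩ := Finset.exists_le_of_sum_le Finset.univ_nonempty
      ((hf n).trans_eq Finset.sum_const_zero.symm)
    exact ⟨i.val, i.val_lt, by simpa using hi⟩

variable [FiniteDimensional ℝ E]

lemma exists_periodic_of_discrete_newton (hN : Tendsto N U atTop) {s : Set E} (hs : IsCompact s)
    {g : E → E} (hg : ContinuousOn g s) {a b K : ℝ} {l : ι → ℝ} (hl : ∀ n, l n ∈ Icc a b)
    {q : ∀ n, ZMod (N n) → E} (hqs : ∀ n i, q n i ∈ s) (hK : ∀ n, kineticEnergy (q n) ≤ K)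
    (hnewton : ∀ n i, momentum (q n) (i + 1) - momentum (q n) i =
      -((l n / N n) • g (q n (i + 1)))) :
    ∃ k ∈ Icc a b, Tendsto l U (𝓝 k) ∧ ∃ x v : ℝ → E, (∀ t, x t ∈ s) ∧
      IsGridLimit U N (fun n j ↦ q n j) x ∧ IsGridLimit U N (fun n j ↦ momentum (q n) j) v ∧
      Function.Periodic x 1 ∧ (∀ t, HasDerivAt x (v t) t) ∧
      ∀ t, HasDerivAt v (-(k • g (x t))) t := by
  obtain ⟨k, hk, hlk⟩ := exists_mem_tendsto_of_isCompact (U := U) isCompact_Icc hl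
  obtain ⟨A, hforce⟩ := exists_norm_momentum_sub_le hs hg hl hqs hnewton
  have hmomentum : ∀ n i, ‖momentum (q n) i‖ ≤ √(2 * K) + A := fun n ↦
    norm_momentum_le (hK n) (hforce n)
  have hstep : ∀ n (j : ℤ), q n ↑(j + 1) - q n j = (1 / N n : ℝ) • momentum (q n) j :=
    fun n j ↦ by rw [Int.cast_add, Int.cast_one, sub_eq_smul_momentum]
  have hforce' : ∀ n (j : ℤ), momentum (q n) ↑(j + 1) - momentum (q n) j =
      (1 / N n : ℝ) • -(l n • g (q n ↑(j + 1))) := fun n j ↦ by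
    rw [Int.cast_add, Int.cast_one, hnewton, smul_neg, smul_smul, one_div_mul_eq_div]
  obtain ⟨x, hxs, hx⟩ := exists_isGridLimit (U := U) hN hs (f := fun n (j : ℤ) ↦ q n j)
    (A := √(2 * K) + A) (fun _ _ ↦ hqs _ _) fun n j ↦ by
      rw [hstep, norm_smul, norm_div, norm_one, Real.norm_natCast, one_div_mul_eq_div]
      gcongr
      exact hmomentum _ _
  obtain ⟨v, -, hv⟩ := exists_isGridLimit (U := U) hN (isCompact_closedBall (0 : E) (√(2 * K) + A))
    (f := fun n (j : ℤ) ↦ momentum (q n) j) (A := A)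
    (fun _ _ ↦ mem_closedBall_zero_iff.2 (hmomentum _ _))
    fun n j ↦ by simpa using hforce n j
  have hforce_lim : IsGridLimit U N (fun n j ↦ -(l n • g (q n ↑(j + 1))))
      fun t ↦ -(k • g (x t)) := fun t ↦
    ((hlk.comp tendsto_fst_gridNhds).smul
      ((hx.comp_continuousOn hg (fun _ _ ↦ hqs _ _) hxs).add_one hN t)).neg
  exact ⟨k, hk, hlk, x, v, hxs, hx, hv, hx.periodic hN fun n j ↦ by simp,
    hx.hasDerivAt hN hv hstep, hv.hasDerivAt hN hforce_lim hforce'⟩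

end DiscreteNewton

namespace PotentialWell

open Filter Topology

variable {E : Type*} [NormedAddCommGroup E] [InnerProductSpace ℝ E] [FiniteDimensional ℝ E]
  (W : PotentialWell E)

lemma hasDerivAt_energy {x v : ℝ → E} {k t : ℝ} (hx : HasDerivAt x (v t) t)
    (hv : HasDerivAt v (-(k • gradient W.potential (x t))) t) (hmem : x t ∈ W.domain) :
    HasDerivAt (fun t ↦ ‖v t‖ ^ 2 / 2 + k * W.potential (x t)) 0 t := by
  have hw := ((W.contDiffAt_potential hmem).differentiableAt one_ne_zero).hasGradientAt
  refine ((hv.norm_sq.div_const 2).add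
    ((hw.hasFDerivAt.comp_hasDerivAt t hx).const_mul k)).congr_deriv ?_
  rw [InnerProductSpace.toDual_apply_apply, inner_neg_right, inner_smul_right, real_inner_comm]
  ring

lemma exists_periodic_zero_energy [Nontrivial E] :
    ∃ k > 0, ∃ x v : ℝ → E, (∀ t, x t ∈ W.domain) ∧ Function.Periodic x 1 ∧
      (∀ t, HasDerivAt x (v t) t) ∧
      (∀ t, HasDerivAt v (-(k • gradient W.potential (x t))) t) ∧
      ∀ t, ‖v t‖ ^ 2 / 2 + k * W.potential (x t) = 0 := by
  obtain ⟨s, hs, hsW, K, a, ha, b, hpolygons⟩ := W.exists_discrete_newton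
  choose q l hl hqs hK hKl hnewton using fun n : ℕ ↦ hpolygons (n + 2) (by lia)
  have hN : Tendsto (· + 2) (hyperfilter ℕ : Filter ℕ) atTop :=
    (tendsto_add_atTop_nat 2).mono_left (Nat.cofinite_eq_atTop ▸ hyperfilter_le_cofinite)
  have hg : ContinuousOn (gradient W.potential) s := fun x hx ↦
    (W.continuousAt_gradient (hsW hx)).continuousWithinAt
  have hw : ContinuousOn W.potential s := fun x hx ↦
    (W.contDiffAt_potential (hsW hx)).continuousAt.continuousWithinAt
  obtain ⟨k, hk, hlk, x, v, hxs, hx, hv, hper, hxv, hvx⟩ :=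
    exists_periodic_of_discrete_newton hN hs hg hl hqs hK fun n i ↦ by
      simpa [momentum] using hnewton n (i + 1)
  let e (n : ℕ) (i : ZMod (n + 2)) : ℝ := ‖momentum (q n) i‖ ^ 2 / 2 + l n * W.potential (q n i)
  have henergy : IsGridLimit (hyperfilter ℕ : Filter ℕ) (· + 2) (fun n j ↦ e n j)
      fun t ↦ ‖v t‖ ^ 2 / 2 + k * W.potential (x t) := fun t ↦
    (((hv t).norm.pow 2).div_const 2).add ((hlk.comp tendsto_fst_gridNhds).mul
      (hx.comp_continuousOn hw (fun _ _ ↦ hqs _ _) hxs t))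
  have hsum n : ∑ i, e n i = 0 := by
    rw [sum_momentum_energy, hKl, sub_self, mul_zero]
  obtain ⟨t₁, ht₁⟩ := IsGridLimit.exists_nonpos_of_sum_nonpos (N := (· + 2)) (f := e) henergy
    fun n ↦ (hsum n).le
  obtain ⟨t₂, ht₂⟩ := IsGridLimit.exists_nonpos_of_sum_nonpos (N := (· + 2))
    (f := fun n i ↦ -e n i) (fun t ↦ (henergy t).neg) fun n ↦ by
      simp only [Finset.sum_neg_distrib]
      exact (neg_eq_zero.2 (hsum n)).le
  have hderiv t := W.hasDerivAt_energy (hxv t) (hvx t) (hsW (hxs t))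
  have hconst := is_const_of_deriv_eq_zero (fun t ↦ (hderiv t).differentiableAt)
    fun t ↦ (hderiv t).deriv
  exact ⟨k, ha.trans_le hk.1, x, v, fun t ↦ hsW (hxs t), hper, hxv, hvx, fun t ↦
    le_antisymm ((hconst t t₁).trans_le ht₁) ((neg_nonpos.1 ht₂).trans_eq (hconst t₂ t))⟩

end PotentialWell

section Wall

open Filter Topology

/-- The profile turning a function `v` into a potential with a strong force at `{v = η}` without
changing it on `{v ≤ 0}`. -/
noncomputable def wall (η y : ℝ) : ℝ := y + max y 0 ^ 2 / (η - y) ^ 4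

/-- The derivative of `wall η` on `(-∞, η)`. -/
noncomputable def wallDeriv (η y : ℝ) : ℝ :=
  1 + 2 * max y 0 / (η - y) ^ 4 + 4 * max y 0 ^ 2 / (η - y) ^ 5

variable {η y : ℝ}

lemma hasDerivAt_max_zero_sq (y : ℝ) : HasDerivAt (fun t : ℝ ↦ max t 0 ^ 2) (2 * max y 0) y := by
  refine hasDerivAt_iff_isLittleO.2 <|
    (Asymptotics.IsBigO.of_bound 1 (.of_forall fun t ↦ ?_)).trans_isLittleO
      (Asymptotics.isLittleO_pow_sub_sub y one_lt_two)
  rw [one_mul, norm_pow, norm_norm, Real.norm_eq_abs, Real.norm_eq_abs, sq_abs, abs_le,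
    smul_eq_mul]
  rcases le_total t 0 with ht | ht <;> rcases le_total y 0 with hy | hy <;>
    simp only [max_eq_left, max_eq_right, ht, hy] <;> constructor <;> nlinarith

lemma hasDerivAt_wall (hy : y < η) : HasDerivAt (wall η) (wallDeriv η y) y := by
  have h0 : η - y ≠ 0 := (sub_pos.2 hy).ne'
  refine ((hasDerivAt_id y).add ((hasDerivAt_max_zero_sq y).div
    (((hasDerivAt_id y).const_sub η).pow 4) (pow_ne_zero 4 h0))).congr_deriv ?_
  simp only [wallDeriv, Pi.pow_apply, id]
  field_simp
  ring

lemma continuousOn_wallDeriv : ContinuousOn (wallDeriv η) (Iio η) := fun y hy ↦ by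
  have h0 : η - y ≠ 0 := (sub_pos.2 hy).ne'
  have h4 := pow_ne_zero 4 h0
  have h5 := pow_ne_zero 5 h0
  unfold wallDeriv
  fun_prop (disch := assumption)

lemma contDiffOn_wall : ContDiffOn ℝ 1 (wall η) (Iio η) := by
  refine (contDiffOn_one_iff_derivWithin (uniqueDiffOn_Iio η)).2
    ⟨fun y hy ↦ (hasDerivAt_wall hy).differentiableAt.differentiableWithinAt,
      continuousOn_wallDeriv.congr fun y hy ↦ ?_⟩
  exact (hasDerivAt_wall hy).hasDerivWithinAt.derivWithin (uniqueDiffOn_Iio η y hy)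

lemma wall_of_nonpos (hy : y ≤ 0) : wall η y = y := by simp [wall, hy]

lemma wallDeriv_of_nonpos (hy : y ≤ 0) : wallDeriv η y = 1 := by simp [wallDeriv, hy]

lemma le_wall : y ≤ wall η y :=
  le_add_of_nonneg_right (by positivity)

lemma sub_le_wall {M : ℝ} (hη : 0 < η) (hy : y < η) (hM : -M ≤ y) :
    η ^ 2 / 4 / (η - y) ^ 4 - (M + 4 / η ^ 2) ≤ wall η y := by
  have : 0 < η - y := sub_pos.2 hy
  rcases le_total (η / 2) y with h | h
  · have hmax : η ^ 2 / 4 / (η - y) ^ 4 ≤ max y 0 ^ 2 / (η - y) ^ 4 := by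
      gcongr
      rw [max_eq_left (by linarith)]
      nlinarith
    have : 0 ≤ 4 / η ^ 2 := by positivity
    unfold wall
    linarith
  · have hfar : η ^ 2 / 4 / (η - y) ^ 4 ≤ 4 / η ^ 2 :=
      calc _ ≤ η ^ 2 / 4 / (η / 2) ^ 4 := by gcongr; linarith
        _ = _ := by field_simp; norm_num
    linarith [le_wall (η := η) (y := y)]

lemma add_wall_le_wallDeriv_mul {δ g : ℝ} (hη : 0 < η) (hy : y < η) (hηδ : η ≤ δ / 4)
    (hg : δ ≤ g + |y|) :
    δ / 4 + wall η y ≤ wallDeriv η y * g := by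
  rcases le_total y 0 with h | h
  · rw [wall_of_nonpos h, wallDeriv_of_nonpos h]
    rw [abs_of_nonpos h] at hg
    linarith
  have : 0 < η - y := sub_pos.2 hy
  rw [abs_of_nonneg h] at hg
  simp only [wall, wallDeriv, max_eq_left h]
  have hsq : y ^ 2 / (η - y) ^ 4 ≤ 4 * y ^ 2 / (η - y) ^ 5 * (δ / 2) :=
    calc y ^ 2 / (η - y) ^ 4 = y ^ 2 / (η - y) ^ 5 * (η - y) := by field_simp
      _ ≤ y ^ 2 / (η - y) ^ 5 * (4 * (δ / 2)) := by gcongr; linarith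
      _ = _ := by ring
  calc _ ≤ (1 + 0 + 4 * y ^ 2 / (η - y) ^ 5) * (δ / 2) := by linarith
    _ ≤ _ := by gcongr <;> first | positivity | linarith

end Wall

section WallWell

open Bornology Filter Metric Topology
open scoped NNReal

variable {E : Type*} [NormedAddCommGroup E] [InnerProductSpace ℝ E] {v : E → ℝ}

section Gradient

variable [CompleteSpace E]

lemma gradient_comp {φ : ℝ → ℝ} {φ' : ℝ} {x : E} (hφ : HasDerivAt φ φ' (v x))
    (hv : DifferentiableAt ℝ v x) : gradient (fun x ↦ φ (v x)) x = φ' • gradient v x := by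
  refine HasGradientAt.gradient (hasGradientAt_iff_hasFDerivAt.2 ?_)
  rw [map_smul]
  exact hφ.comp_hasFDerivAt x hv.hasGradientAt.hasFDerivAt

lemma contDiff_gradient {n : WithTop ℕ∞} (hv : ContDiff ℝ (n + 1) v) :
    ContDiff ℝ n (gradient v) :=
  (InnerProductSpace.toDual ℝ E).symm.contDiff.comp (hv.fderiv_right le_rfl)

lemma exists_lt_of_gradient_ne_zero {x : E} (hx : gradient v x ≠ 0) : ∃ y, v y < v x := by
  by_contra! h
  refine hx ?_
  rw [gradient, IsLocalMin.fderiv_eq_zero (.of_forall h), map_zero]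

end Gradient

variable [FiniteDimensional ℝ E]

lemma exists_isBounded_frontier_ge (hv : Continuous v) (hcompact : IsCompact {x | v x ≤ 0}) :
    ∃ U : Set E, IsOpen U ∧ IsBounded U ∧ {x | v x ≤ 0} ⊆ U ∧
      ∃ m > 0, ∀ x ∈ frontier U, m ≤ v x := by
  obtain ⟨R, hR⟩ := hcompact.isBounded.subset_ball 0
  have hpos : ∀ x ∈ sphere (0 : E) R, 0 < v x := fun x hx ↦ by
    by_contra! h
    exact (mem_sphere.1 hx).not_lt (mem_ball.1 (hR h))
  obtain ⟨m, hm, hmv⟩ := (isCompact_sphere (0 : E) R).exists_forall_le' hv.continuousOn hpos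
  exact ⟨ball 0 R, isOpen_ball, isBounded_ball, hR, m, hm,
    fun x hx ↦ hmv x (frontier_ball_subset_sphere hx)⟩

lemma sub_le_mul_infDist_compl [Nontrivial E] {U : Set E} {η : ℝ} {G : ℝ≥0} (hv : Continuous v)
    (hU : IsOpen U) (hUb : IsBounded U) (hfrontier : ∀ x ∈ frontier U, η ≤ v x)
    (hG : LipschitzOnWith G v (closure U)) {x : E} (hx : x ∈ U ∩ {x | v x < η}) :
    η - v x ≤ G * infDist x (U ∩ {x | v x < η})ᶜ := by
  have hne : U ∩ {x | v x < η} ≠ univ := fun h ↦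
    NormedSpace.unbounded_univ ℝ E (h ▸ hUb.subset inter_subset_left)
  obtain ⟨y, hy, hdist⟩ := exists_mem_frontier_infDist_compl_eq_dist hx hne
  rw [(hU.inter (isOpen_lt hv continuous_const)).frontier_eq] at hy
  have hyU : y ∈ closure U := closure_mono inter_subset_left hy.1
  have hηy : η ≤ v y := by
    by_cases h : y ∈ U
    · exact not_lt.1 fun hlt ↦ hy.2 ⟨h, hlt⟩
    · exact hfrontier y (hU.frontier_eq ▸ ⟨hyU, h⟩)
  rw [hdist, dist_comm]
  calc η - v x ≤ v y - v x := by linarith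
    _ ≤ dist (v y) (v x) := le_abs_self _
    _ ≤ G * dist y x := hG.dist_le_mul y hyU x (subset_closure hx.1)

/-- The well obtained from `v` by erecting a wall at `{v = η}`, inside a bounded set `U`
on whose frontier `v ≥ η`. -/
noncomputable def wallWell [Nontrivial E] {U : Set E} {η M δ : ℝ} {G L : ℝ≥0}
    (hv : ContDiff ℝ 1 v) (hU : IsOpen U) (hUb : IsBounded U) (hη : 0 < η) (hηδ : η ≤ δ / 4)
    (hfrontier : ∀ x ∈ frontier U, η ≤ v x) (hG : LipschitzOnWith G v (closure U))
    (hL : LipschitzOnWith L (gradient v) U) (hM : ∀ x ∈ U, -M ≤ v x)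
    (hδ : ∀ x ∈ U, δ ≤ ‖gradient v x‖ ^ 2 + |v x|) (hneg : ∃ x ∈ U, v x < 0) :
    PotentialWell E where
  domain := U ∩ {x | v x < η}
  potential x := wall η (v x)
  field := gradient v
  c := η ^ 2 / 4 / (G + 1) ^ 4
  M := M + 4 / η ^ 2
  δ := δ / 4
  L := L
  isOpen_domain := hU.inter (isOpen_lt hv.continuous continuous_const)
  isBounded_domain := hUb.subset inter_subset_left
  contDiffOn_potential := contDiffOn_wall.comp hv.contDiffOn fun _ hx ↦ hx.2
  exists_potential_neg := by
    obtain ⟨x, hx, hxv⟩ := hneg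
    exact ⟨x, ⟨hx, hxv.trans hη⟩, (wall_of_nonpos hxv.le).trans_lt hxv⟩
  c_pos := by positivity
  strong_force x hx := by
    have : 0 < η - v x := sub_pos.2 hx.2
    have hdist : η - v x ≤ (G + 1) * infDist x (U ∩ {x | v x < η})ᶜ := by
      linarith [sub_le_mul_infDist_compl hv.continuous hU hUb hfrontier hG hx,
        infDist_nonneg (x := x) (s := (U ∩ {x | v x < η})ᶜ)]
    refine le_trans ?_ (sub_le_wall hη hx.2 (hM x hx.1))
    rw [div_div, ← mul_pow]
    gcongr
  lipschitzOnWith_field := hL.mono inter_subset_left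
  δ_pos := by linarith
  contact x hx := by
    rw [gradient_comp (hasDerivAt_wall hx.2) (hv.differentiable one_ne_zero x),
      real_inner_smul_left, real_inner_self_eq_norm_sq]
    exact add_wall_le_wallDeriv_mul hη hx.2 hηδ (hδ x hx.1)

lemma exists_potentialWell [Nontrivial E] (hv : ContDiff ℝ 2 v)
    (hcompact : IsCompact {x | v x ≤ 0}) (hneg : ∃ x, v x < 0)
    (hreg : ∀ x, v x = 0 → gradient v x ≠ 0) :
    ∃ W : PotentialWell E, ∀ x ∈ W.domain, W.potential x ≤ 0 →
      W.potential x = v x ∧ gradient W.potential x = gradient v x := by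
  have hv₁ : ContDiff ℝ 1 v := hv.of_le one_le_two
  have hgradient : ContDiff ℝ 1 (gradient v) := contDiff_gradient (by rwa [one_add_one_eq_two])
  obtain ⟨U, hU, hUb, hsub, m, hm, hmU⟩ := exists_isBounded_frontier_ge hv.continuous hcompact
  have hUc : IsCompact (closure U) := hUb.isCompact_closure
  obtain ⟨G, hG⟩ := hv₁.locallyLipschitz.locallyLipschitzOn.exists_lipschitzOnWith_of_compact hUc
  obtain ⟨L, hL⟩ :=
    hgradient.locallyLipschitz.locallyLipschitzOn.exists_lipschitzOnWith_of_compact hUc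
  obtain ⟨M, hM⟩ := hUc.exists_bound_of_continuousOn hv.continuous.continuousOn
  obtain ⟨δ, hδ, hδU⟩ := hUc.exists_forall_le' (a := 0)
    (f := fun x ↦ ‖gradient v x‖ ^ 2 + |v x|)
    ((hgradient.continuous.norm.pow 2).add hv.continuous.abs).continuousOn fun x _ ↦ by
      rcases eq_or_ne (v x) 0 with h | h
      · have := norm_pos_iff.2 (hreg x h)
        positivity
      · have := abs_pos.2 h
        positivity
  obtain ⟨x₀, hx₀⟩ := hneg
  let W := wallWell hv₁ hU hUb (lt_min hm (by positivity : 0 < δ / 4)) (min_le_right _ _)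
    (fun x hx ↦ (min_le_left _ _).trans (hmU x hx)) hG (hL.mono subset_closure)
    (fun x hx ↦ neg_le_of_abs_le (hM x (subset_closure hx)))
    (fun x hx ↦ hδU x (subset_closure hx)) ⟨x₀, hsub hx₀.le, hx₀⟩
  refine ⟨W, fun x hx hxW ↦ ?_⟩
  have hvx : v x ≤ 0 := le_wall.trans hxW
  refine ⟨wall_of_nonpos hvx, ?_⟩
  rw [← one_smul ℝ (gradient v x), ← wallDeriv_of_nonpos (η := min m (δ / 4)) hvx]
  exact gradient_comp (hasDerivAt_wall hx.2) (hv₁.differentiable one_ne_zero x)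

end WallWell

section ClosedOrbits

open Topology

variable {E : Type*} [NormedAddCommGroup E]

lemma contDiff_two_of_hasDerivAt [NormedSpace ℝ E] {q p f : ℝ → E}
    (hq : ∀ t, HasDerivAt q (p t) t) (hp : ∀ t, HasDerivAt p (f t) t) (hf : Continuous f) :
    ContDiff ℝ 2 q := by
  rw [← one_add_one_eq_two, contDiff_succ_iff_deriv]
  refine ⟨fun t ↦ (hq t).differentiableAt, by simp, ?_⟩
  rw [deriv_eq hq, contDiff_one_iff_deriv, deriv_eq hp]
  exact ⟨fun t ↦ (hp t).differentiableAt, hf⟩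

lemma exists_ne_of_hasDerivAt [NormedSpace ℝ E] {q p f : ℝ → E} (hq : ∀ t, HasDerivAt q (p t) t)
    (hp : ∀ t, HasDerivAt p (f t) t) {t₀ : ℝ} (h : ¬(f t₀ = 0 ∧ p t₀ = 0)) :
    ∃ t, q t ≠ q t₀ := by
  by_contra! hconst
  have hp₀ : p = 0 := by rw [← deriv_eq hq, funext hconst, deriv_const']; rfl
  have hf₀ : f = 0 := by rw [← deriv_eq hp, hp₀, deriv_zero]
  exact h ⟨congrFun hf₀ t₀, congrFun hp₀ t₀⟩

lemma setOf_le_eq_image_fst [NormedSpace ℝ E] [Nontrivial E] (V : E → ℝ) (h : ℝ) :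
    {x | V x ≤ h} = Prod.fst '' {x : E × E | V x.1 + ‖x.2‖ ^ 2 / 2 = h} := by
  ext x
  constructor
  · intro (hx : V x ≤ h)
    obtain ⟨p, hp⟩ := exists_norm_eq E (Real.sqrt_nonneg (2 * (h - V x)))
    refine ⟨(x, p), ?_, rfl⟩
    change V x + ‖p‖ ^ 2 / 2 = h
    rw [hp, Real.sq_sqrt (by linarith)]
    ring
  · rintro ⟨⟨x, p⟩, rfl, rfl⟩
    change V x ≤ V x + ‖p‖ ^ 2 / 2
    linarith [sq_nonneg ‖p‖]

lemma finiteDimensional_of_isCompact_le [NormedSpace ℝ E] {v : E → ℝ} {a : ℝ} {x : E}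
    (hv : Continuous v) (hcompact : IsCompact {x | v x ≤ a}) (hx : v x < a) :
    FiniteDimensional ℝ E :=
  have : LocallyCompactSpace E := hcompact.locallyCompactSpace_of_mem_nhds_of_addGroup
    (hv.continuousAt.eventually_le_const hx)
  .of_locallyCompactSpace ℝ

variable [InnerProductSpace ℝ E]

lemma PotentialWell.exists_periodic_newton [FiniteDimensional ℝ E] [Nontrivial E]
    (W : PotentialWell E) :
    ∃ T > 0, ∃ q p : ℝ → E, (∀ t, q t ∈ W.domain) ∧ Function.Periodic q T ∧
      (∀ t, HasDerivAt q (p t) t) ∧ (∀ t, HasDerivAt p (-gradient W.potential (q t)) t) ∧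
      ∀ t, ‖p t‖ ^ 2 / 2 + W.potential (q t) = 0 := by
  obtain ⟨k, hk, x, v, hxW, hper, hx, hv, henergy⟩ := W.exists_periodic_zero_energy
  set c := (√k)⁻¹
  have hc : c ^ 2 * k = 1 := by rw [inv_pow, Real.sq_sqrt hk.le, inv_mul_cancel₀ hk.ne']
  have hscale t : HasDerivAt (fun t ↦ c * t) c t := by simpa using (hasDerivAt_id t).const_mul c
  refine ⟨√k, Real.sqrt_pos.2 hk, fun t ↦ x (c * t), fun t ↦ c • v (c * t), fun t ↦ hxW _,
    fun t ↦ ?_, fun t ↦ (hx _).scomp t (hscale t), fun t ↦ ?_, fun t ↦ ?_⟩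
  · beta_reduce
    rw [mul_add, inv_mul_cancel₀ (Real.sqrt_pos.2 hk).ne', hper]
  · refine (((hv _).scomp t (hscale t)).const_smul c).congr_deriv ?_
    rw [smul_neg, smul_neg, smul_smul, smul_smul, ← sq, hc, one_smul]
  · calc ‖c • v (c * t)‖ ^ 2 / 2 + W.potential (x (c * t))
        = c ^ 2 * (‖v (c * t)‖ ^ 2 / 2) + c ^ 2 * k * W.potential (x (c * t)) := by
          rw [norm_smul, mul_pow, Real.norm_eq_abs, sq_abs, hc]; ring
      _ = c ^ 2 * (‖v (c * t)‖ ^ 2 / 2 + k * W.potential (x (c * t))) := by ring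
      _ = 0 := by rw [henergy, mul_zero]

lemma exists_lt_of_regular_energy_level [CompleteSpace E] {V : E → ℝ} {h : ℝ}
    (hne : ∃ x : E × E, V x.1 + ‖x.2‖ ^ 2 / 2 = h)
    (hreg : ∀ x : E × E, V x.1 + ‖x.2‖ ^ 2 / 2 = h → ¬(gradient V x.1 = 0 ∧ x.2 = 0)) :
    ∃ x, V x < h := by
  obtain ⟨⟨x, p⟩, rfl⟩ := hne
  rcases eq_or_ne p 0 with rfl | hp
  · simpa using exists_lt_of_gradient_ne_zero fun hx ↦ hreg (x, 0) rfl ⟨hx, rfl⟩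
  · have := norm_pos_iff.2 hp
    exact ⟨x, lt_add_of_pos_right _ (by positivity)⟩

lemma exists_periodic_newton_of_isCompact [FiniteDimensional ℝ E] [Nontrivial E] {v : E → ℝ}
    (hv : ContDiff ℝ 2 v) (hcompact : IsCompact {x | v x ≤ 0}) (hneg : ∃ x, v x < 0)
    (hreg : ∀ x, v x = 0 → gradient v x ≠ 0) :
    ∃ T > 0, ∃ q p : ℝ → E, Function.Periodic q T ∧ (∀ t, HasDerivAt q (p t) t) ∧
      (∀ t, HasDerivAt p (-gradient v (q t)) t) ∧ ∀ t, ‖p t‖ ^ 2 / 2 + v (q t) = 0 := by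
  obtain ⟨W, hW⟩ := exists_potentialWell hv hcompact hneg hreg
  obtain ⟨T, hT, q, p, hmem, hper, hq, hp, henergy⟩ := W.exists_periodic_newton
  have hagree t := hW (q t) (hmem t) (by linarith [henergy t, sq_nonneg ‖p t‖])
  exact ⟨T, hT, q, p, hper, hq, fun t ↦ (hagree t).2 ▸ hp t, fun t ↦ (hagree t).1 ▸ henergy t⟩

end ClosedOrbits

theorem closed_orbit_exists_general {E : Type*} [NormedAddCommGroup E] [InnerProductSpace ℝ E]
    [CompleteSpace E] (V : E → ℝ) (hV : ContDiff ℝ 2 V) (h : ℝ)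
    (hne : ∃ x : E × E, V x.1 + ‖x.2‖ ^ 2 / 2 = h)
    (hcompact : IsCompact {x : E × E | V x.1 + ‖x.2‖ ^ 2 / 2 = h})
    (hreg : ∀ x : E × E, V x.1 + ‖x.2‖ ^ 2 / 2 = h → ¬(gradient V x.1 = 0 ∧ x.2 = 0)) :
    ∃ T : ℝ, 0 < T ∧ ∃ q : ℝ → E, ContDiff ℝ 2 q ∧ Function.Periodic q T ∧ (∃ t : ℝ, q t ≠ q 0) ∧
      (∀ t : ℝ, deriv (deriv q) t = -gradient V (q t)) ∧ V (q 0) + ‖deriv q 0‖ ^ 2 / 2 = h := by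
  have : Nontrivial E := not_subsingleton_iff_nontrivial.1 fun _ ↦
    hreg _ hne.choose_spec ⟨Subsingleton.elim _ _, Subsingleton.elim _ _⟩
  have hgradient : gradient (fun x ↦ V x - h) = gradient V := by
    funext x
    rw [gradient, fderiv_sub_const, gradient]
  have hboundary : ∀ x, V x - h = 0 → gradient (fun x ↦ V x - h) x ≠ 0 := fun x hx hcrit ↦
    hreg (x, 0) (by simpa [sub_eq_zero] using hx) ⟨hgradient ▸ hcrit, rfl⟩
  have hle : IsCompact {x | V x - h ≤ 0} := by
    simpa only [sub_nonpos, setOf_le_eq_image_fst] using hcompact.image continuous_fst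
  obtain ⟨x₀, hx₀⟩ : ∃ x, V x - h < 0 :=
    (exists_lt_of_regular_energy_level hne hreg).imp fun _ ↦ sub_neg.2
  have : FiniteDimensional ℝ E :=
    finiteDimensional_of_isCompact_le (hV.continuous.sub continuous_const) hle hx₀
  obtain ⟨T, hT, q, p, hper, hq, hp, henergy⟩ :=
    exists_periodic_newton_of_isCompact (hV.sub contDiff_const) hle ⟨x₀, hx₀⟩ hboundary
  rw [hgradient] at hp
  have hlevel : V (q 0) + ‖p 0‖ ^ 2 / 2 = h := by linarith [henergy 0]
  have hforce : Continuous fun t ↦ -gradient V (q t) :=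
    ((contDiff_gradient (hV.of_le one_add_one_eq_two.le)).continuous.comp
      (continuous_iff_continuousAt.2 fun t ↦ (hq t).continuousAt)).neg
  refine ⟨T, hT, q, contDiff_two_of_hasDerivAt hq hp hforce, hper,
    exists_ne_of_hasDerivAt hq hp fun h₀ ↦ hreg (q 0, p 0) hlevel ⟨neg_eq_zero.1 h₀.1, h₀.2⟩,
    ?_, ?_⟩
  · rw [deriv_eq hq]
    exact fun t ↦ (hp t).deriv
  · rwa [(hq 0).deriv]

/-- **Existence of closed orbits on compact regular energy levels (Bolotin), Euclidean case.**
If the energy level `S_h = {(q,p) | V q + ‖p‖²/2 = h}` is nonempty, compact and regular,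
then Newton's equation `q'' = -∇V(q)` has a nonconstant periodic solution on the energy
level `h`. -/
theorem closed_orbit_exists
    (n : ℕ) (hn : 1 ≤ n)
    (V : EuclideanSpace ℝ (Fin n) → ℝ) (hV : ContDiff ℝ (⊤ : ℕ∞) V) (h : ℝ)
    (hne : ∃ x : EuclideanSpace ℝ (Fin n) × EuclideanSpace ℝ (Fin n),
      V x.1 + ‖x.2‖ ^ 2 / 2 = h)
    (hcompact : IsCompact
      {x : EuclideanSpace ℝ (Fin n) × EuclideanSpace ℝ (Fin n) | V x.1 + ‖x.2‖ ^ 2 / 2 = h})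
    (hreg : ∀ x : EuclideanSpace ℝ (Fin n) × EuclideanSpace ℝ (Fin n),
      V x.1 + ‖x.2‖ ^ 2 / 2 = h → ¬(gradient V x.1 = 0 ∧ x.2 = 0)) :
    ∃ T : ℝ, 0 < T ∧ ∃ q : ℝ → EuclideanSpace ℝ (Fin n),
      ContDiff ℝ 2 q ∧
      Function.Periodic q T ∧
      (∃ t : ℝ, q t ≠ q 0) ∧
      (∀ t : ℝ, deriv (deriv q) t = -gradient V (q t)) ∧
      V (q 0) + ‖deriv q 0‖ ^ 2 / 2 = h := by
  exact closed_orbit_exists_general V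
    (hV.of_le (WithTop.coe_le_coe.2 (le_top : (2 : ℕ∞) ≤ ⊤))) h hne hcompact hreg
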